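/- The only n-dimensional scroll over a smooth curve in P^{2n−1} is the Segre embedding P^1 × P^{n−1} ⊂ P^{2n−1}. -/

import Mathlib

/-!
The proof works on the affine cone `V ⊆ ℂ^{2n}`. It is irreducible, with tangent spaces of dimension
`n + 1` away from the vertex, and a union of `n`-dimensional linear spaces, the fibres, any two of
which meet only in `0` and hence are complementary. There are infinitely many fibres
(`RuledCone.infinite`), so by compactness of the unit sphere one of them, `F`, is accumulated by
others at a non-zero point (`RuledCone.exists_accumulated`). In linear coordinates `(x, y)` with
`F = {x = 0}` and another fibre `F₀ = {y = 0}`, every other fibre is a graph `x = C y`, and also a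
graph `y = A x`, of an isomorphism of `ℂⁿ`.

*The normal direction along `F`.* At a point `(0, y)` of `F` the tangent space of `V` is `F` plus a
line in the `x`-direction. An argument in the style of Hurwitz's theorem (`linear_hurwitz`), based on
the fact that `C y` never vanishes for `y ≠ 0`, shows that there are fibres `x = C y` with
`‖C‖` arbitrarily small (`FibreGerm.exists_small`), and that a limit `B` of the maps `C / ‖C‖` is
invertible (`FibreGerm.exists_limit`). So that line is spanned by `B y`, and Taylor expansion of the
equations of `V` gives `|x ∧ B y| = O(|x|²)` on all of `V` (`FibreGerm.wedge_bound`).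

*From the bound to equations.* For fixed `x`, the coordinates of `x ∧ B y` are bounded polynomials on
the closed set of points of `V` over `x`. Such polynomials take only finitely many values
(`finite_image_of_bounded`, from the Nullstellensatz and the uncountability of `ℂ`). Hence the
quadratic maps `x ↦ x ∧ B A x`, for the fibres `y = A x`, form a finite set. Irreducibility of `V`
leaves only one of them, and `F₀`, for which `A = 0`, shows that it is zero
(`RuledCone.wedge_eq_zero`). So `x` and `B y` are proportional on `V`.

*Equality.* Conversely, for `x ≠ 0` the fibres meet the line of points `(x, t B⁻¹ x)` in infinitely
many points, so the line lies in the closed set `V` (`RuledCone.mem_of_wedge_eq_zero`). Thus `V` is the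
cone of pairs `(x, y)` with `x` and `B y` proportional, which is the cone over the Segre variety.
-/

open MvPolynomial

noncomputable section

/-- Affine space `ℂ^{N+1}`. -/
abbrev Aff (N : ℕ) := Fin (N + 1) → ℂ

/-- Projective `N`-space over `ℂ`. -/
abbrev Proj (N : ℕ) := Projectivization ℂ (Aff N)

/-- Zariski-closed subsets of affine space: common zero loci of polynomials. -/
def zClosed {N : ℕ} (V : Set (Aff N)) : Prop :=
  ∃ S : Set (MvPolynomial (Fin (N + 1)) ℂ), V = {x | ∀ p ∈ S, eval x p = 0}

/-- Zariski closure in affine space. -/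
def zClosure {N : ℕ} (V : Set (Aff N)) : Set (Aff N) :=
  ⋂₀ {C | zClosed C ∧ V ⊆ C}

/-- Irreducibility of a subset of affine space w.r.t. the Zariski topology. -/
def zIrred {N : ℕ} (V : Set (Aff N)) : Prop :=
  V.Nonempty ∧ ∀ C₁ C₂ : Set (Aff N), zClosed C₁ → zClosed C₂ → V ⊆ C₁ ∪ C₂ →
    V ⊆ C₁ ∨ V ⊆ C₂

/-- Dimension of a subset of affine space: Krull dimension of the poset of
irreducible Zariski-closed subsets contained in it. -/
def adim {N : ℕ} (V : Set (Aff N)) : WithBot ℕ∞ :=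
  Order.krullDim {W : Set (Aff N) // zClosed W ∧ zIrred W ∧ W ⊆ V}

/-- The affine cone over a set of projective points. -/
def cone {N : ℕ} (X : Set (Proj N)) : Set (Aff N) :=
  {v | ∃ hv : v ≠ 0, Projectivization.mk ℂ v hv ∈ X} ∪ {0}

/-- A projectively closed set. -/
def pClosed {N : ℕ} (X : Set (Proj N)) : Prop := zClosed (cone X)

/-- Projective Zariski closure. -/
def pClosure {N : ℕ} (X : Set (Proj N)) : Set (Proj N) :=
  {z | z.rep ∈ zClosure (cone X)}

/-- The vanishing ideal (as a set of polynomials) of a subset of `ℂ^ι`. -/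
def vanishSet {ι : Type} [Fintype ι] (V : Set (ι → ℂ)) : Set (MvPolynomial ι ℂ) :=
  {p | ∀ v ∈ V, eval v p = 0}

/-- The differential of a polynomial at a point, as a linear form. -/
def polyDiff {ι : Type} [Fintype ι] (v : ι → ℂ) (p : MvPolynomial ι ℂ) :
    (ι → ℂ) →ₗ[ℂ] ℂ :=
  ∑ i, eval v (pderiv i p) • LinearMap.proj i

/-- The (embedded, affine) Zariski tangent space of `V` at `v`. -/
def tangentAt {ι : Type} [Fintype ι] (V : Set (ι → ℂ)) (v : ι → ℂ) :
    Submodule ℂ (ι → ℂ) :=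
  ⨅ p ∈ vanishSet V, LinearMap.ker (polyDiff v p)

/-- The affine cone over the embedded projective tangent space of `X` at `x`. -/
def projTangent {N : ℕ} (X : Set (Proj N)) (x : Proj N) : Submodule ℂ (Aff N) :=
  tangentAt (cone X) x.rep

/-- The embedded projective tangent space `T_x X ⊆ ℙ^N` as a set of points. -/
def tangentSet {N : ℕ} (X : Set (Proj N)) (x : Proj N) : Set (Proj N) :=
  {z | z.submodule ≤ projTangent X x}

/-- `X` is a closed irreducible smooth projective variety of dimension `n`
(the affine cone has dimension `n+1`, and every embedded tangent space has
linear dimension `n+1`). -/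
def SmoothVariety {N : ℕ} (X : Set (Proj N)) (n : ℕ) : Prop :=
  pClosed X ∧ zIrred (cone X) ∧ adim (cone X) = ((n + 1 : ℕ) : WithBot ℕ∞) ∧
    ∀ x ∈ X, Module.finrank ℂ (projTangent X x) = n + 1

/-- Non-degeneracy: `X` is contained in no hyperplane. -/
def Nondeg {N : ℕ} (X : Set (Proj N)) : Prop :=
  Submodule.span ℂ (cone X) = ⊤

/-- The projective line through two points (all of `ℙ^N` if they coincide... it
is the projectivization of the span of the two representatives). -/
def pline {N : ℕ} (x y : Proj N) : Set (Proj N) :=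
  {z | z.submodule ≤ x.submodule ⊔ y.submodule}

/-- The relative secant (join) variety `S(Y,X)`: closure of the union of the
lines joining a point of `Y` to a distinct point of `X`. -/
def joinVar {N : ℕ} (Y X : Set (Proj N)) : Set (Proj N) :=
  pClosure {z | ∃ y ∈ Y, ∃ x ∈ X, y ≠ x ∧ z ∈ pline y x}

/-- The secant variety `SX`. -/
def secantVar {N : ℕ} (X : Set (Proj N)) : Set (Proj N) := joinVar X X

/-- The relative tangent variety `T(Y,X) = ⋃_{y ∈ Y} T_y X`. -/
def relTangent {N : ℕ} (Y X : Set (Proj N)) : Set (Proj N) :=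
  ⋃ y ∈ Y, tangentSet X y

/-- The hyperplane (as a linear subspace of `ℂ^{N+1}`) with coordinate vector `a`. -/
def hypSub {N : ℕ} (a : Aff N) : Submodule ℂ (Aff N) :=
  LinearMap.ker (∑ i, a i • (LinearMap.proj i : (Aff N) →ₗ[ℂ] ℂ))

/-- The dual variety of `X`, identified with a subvariety of `ℙ^N` via
coordinates of hyperplanes: closure of the set of hyperplanes tangent to `X`
at some point. -/
def dualVar {N : ℕ} (X : Set (Proj N)) : Set (Proj N) :=
  pClosure {h | ∃ x ∈ X, projTangent X x ≤ hypSub h.rep}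

/-- The entry locus `Σ_z` of a point `z` of the secant variety. -/
def entryLocus {N : ℕ} (X : Set (Proj N)) (z : Proj N) : Set (Proj N) :=
  pClosure {x | x ∈ X ∧ ∃ x' ∈ X, x ≠ x' ∧ z ∈ pline x x'}

/-- A scroll structure on `X ⊆ ℙ^N`: a smooth base variety `W` (of dimension
`b`, embedded in some projective space) together with a family of disjoint
linearly embedded fibres of dimension `n - b` covering `X`. -/
structure ScrollOn (N : ℕ) (X : Set (Proj N)) (n b : ℕ) where
  M : ℕ
  W : Set (Proj M)
  baseSmooth : SmoothVariety W b
  fdim : ℕ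
  dim_eq : n = b + fdim
  Fsub : Proj M → Submodule ℂ (Aff N)
  fib_rank : ∀ w ∈ W, Module.finrank ℂ (Fsub w) = fdim + 1
  cover : X = ⋃ w ∈ W, {z : Proj N | z.submodule ≤ Fsub w}
  disjoint : ∀ w ∈ W, ∀ w' ∈ W, w ≠ w' →
    ∀ z : Proj N, z.submodule ≤ Fsub w → z.submodule ≤ Fsub w' → False

/-- The fibre of a scroll over a base point. -/
def ScrollOn.fib {N : ℕ} {X : Set (Proj N)} {n b : ℕ} (S : ScrollOn N X n b)
    (w : Proj S.M) : Set (Proj N) :=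
  {z | z.submodule ≤ S.Fsub w}

/-- The coordinate vector of the Segre product of two vectors. -/
def segreVec (a b : ℕ) (y : Fin a → ℂ) (w : Fin b → ℂ) : Fin a × Fin b → ℂ :=
  fun p => y p.1 * w p.2

/-- `X` is (projectively equivalent to) the Segre embedding
`ℙ^{a-1} × ℙ^{b-1} ⊆ ℙ^{ab-1}`. -/
def IsSegre {N : ℕ} (a b : ℕ) (X : Set (Proj N)) : Prop :=
  ∃ e : (Fin a × Fin b → ℂ) ≃ₗ[ℂ] (Aff N),
    X = {z | ∃ y : Fin a → ℂ, ∃ w : Fin b → ℂ,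
      z.submodule = Submodule.span ℂ {e (segreVec a b y w)}}

/-- `X` is an isomorphic projection of the Segre embedding
`ℙ^{a-1} × ℙ^{b-1}`: the image of the Segre variety under a linear projection
which is injective on points and on embedded tangent spaces of the Segre. -/
def IsProjectedSegre {N : ℕ} (a b : ℕ) (X : Set (Proj N)) : Prop :=
  ∃ L : (Fin a × Fin b → ℂ) →ₗ[ℂ] (Aff N),
    (∀ y w, segreVec a b y w ≠ 0 → L (segreVec a b y w) ≠ 0) ∧
    (∀ y w y' w', segreVec a b y w ≠ 0 → segreVec a b y' w' ≠ 0 →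
      Submodule.span ℂ {L (segreVec a b y w)} =
        Submodule.span ℂ {L (segreVec a b y' w')} →
      Submodule.span ℂ {segreVec a b y w} =
        Submodule.span ℂ {segreVec a b y' w'}) ∧
    (∀ y w, segreVec a b y w ≠ 0 →
      Disjoint
        (tangentAt {v | ∃ y' w', v = segreVec a b y' w'} (segreVec a b y w))
        (LinearMap.ker L)) ∧
    X = {z | ∃ y w, segreVec a b y w ≠ 0 ∧
      z.submodule = Submodule.span ℂ {L (segreVec a b y w)}}

end
noncomputable section

/-- The quadratic Veronese coordinates of a vector in `ℂ³`. -/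
def veroQ (y : Fin 3 → ℂ) : Fin 6 → ℂ :=
  ![y 0 * y 0, y 0 * y 1, y 0 * y 2, y 1 * y 1, y 1 * y 2, y 2 * y 2]

/-- `X` is (projectively equivalent to) the Veronese surface in `ℙ⁵`. -/
def IsVeroneseSurface {N : ℕ} (X : Set (Proj N)) : Prop :=
  ∃ h : N + 1 = 6, ∃ g : (Aff N) ≃ₗ[ℂ] (Aff N),
    X = {z | ∃ y : Fin 3 → ℂ, y ≠ 0 ∧
      z.submodule = Submodule.span ℂ {g fun i => veroQ y (Fin.cast h i)}}

/-- The coordinates of a pure spinor: `(1, x_{ij}, Pf_i(x))` for a skew matrix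
with upper entries `x i j` (`i < j`); the affine parametrization of the
10-dimensional spinor variety `S₄ ⊆ ℙ^{15}`. -/
def spinVec (x : Fin 5 → Fin 5 → ℂ) : Fin 16 → ℂ :=
  ![1, x 0 1, x 0 2, x 0 3, x 0 4, x 1 2, x 1 3, x 1 4, x 2 3, x 2 4, x 3 4,
    x 1 2 * x 3 4 - x 1 3 * x 2 4 + x 1 4 * x 2 3,
    x 0 2 * x 3 4 - x 0 3 * x 2 4 + x 0 4 * x 2 3,
    x 0 1 * x 3 4 - x 0 3 * x 1 4 + x 0 4 * x 1 3,
    x 0 1 * x 2 4 - x 0 2 * x 1 4 + x 0 4 * x 1 2,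
    x 0 1 * x 2 3 - x 0 2 * x 1 3 + x 0 3 * x 1 2]

/-- `X` is (projectively equivalent to) the 10-dimensional spinor variety
`S₄ ⊆ ℙ^{15}`. -/
def IsSpinorVariety {N : ℕ} (X : Set (Proj N)) : Prop :=
  ∃ e : (Fin 16 → ℂ) ≃ₗ[ℂ] (Aff N),
    X = pClosure {z | ∃ x : Fin 5 → Fin 5 → ℂ,
      z.submodule = Submodule.span ℂ {e (spinVec x)}}

/-- The vanishing ideal of a subset of affine space. -/
def vanishIdeal {N : ℕ} (V : Set (Aff N)) : Ideal (MvPolynomial (Fin (N + 1)) ℂ) where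
  carrier := vanishSet V
  add_mem' := by intro a b ha hb v hv; simp [vanishSet] at *; simp [ha v hv, hb v hv]
  zero_mem' := by intro v hv; simp
  smul_mem' := by intro c a ha v hv; simp [vanishSet] at *; simp [ha v hv]

/-- Saturation of a homogeneous ideal with respect to the irrelevant ideal. -/
def satIdeal {N : ℕ} (J : Ideal (MvPolynomial (Fin (N + 1)) ℂ)) :
    Ideal (MvPolynomial (Fin (N + 1)) ℂ) where
  carrier := {p | ∃ k : ℕ, ∀ i : Fin (N + 1), (X i) ^ k * p ∈ J}
  zero_mem' := ⟨0, fun i => by simp⟩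
  add_mem' := by
    rintro a b ⟨k, hk⟩ ⟨l, hl⟩
    refine ⟨k + l, fun i => ?_⟩
    have h : (X i : MvPolynomial (Fin (N + 1)) ℂ) ^ (k + l) * (a + b) =
        (X i) ^ l * ((X i) ^ k * a) + (X i) ^ k * ((X i) ^ l * b) := by ring
    rw [h]
    exact J.add_mem (J.mul_mem_left _ (hk i)) (J.mul_mem_left _ (hl i))
  smul_mem' := by
    rintro c a ⟨k, hk⟩
    refine ⟨k, fun i => ?_⟩
    have h : (X i : MvPolynomial (Fin (N + 1)) ℂ) ^ k * (c • a) =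
        c * ((X i) ^ k * a) := by rw [smul_eq_mul]; ring
    rw [h]
    exact J.mul_mem_left _ (hk i)

/-- The projective scheme `Proj` of the quotient by `J` is normal: every
localization at a prime not containing the irrelevant ideal is a normal
domain. -/
def ProjNormal {N : ℕ} (J : Ideal (MvPolynomial (Fin (N + 1)) ℂ)) : Prop :=
  ∀ P : Ideal (MvPolynomial (Fin (N + 1)) ℂ ⧸ J), ∀ hP : P.IsPrime,
    ¬ (Ideal.map (Ideal.Quotient.mk J)
        (Ideal.span (Set.range MvPolynomial.X)) ≤ P) →
      IsDomain (@Localization.AtPrime _ _ P hP) ∧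
      IsIntegrallyClosed (@Localization.AtPrime _ _ P hP)

/-- Data describing an algebraic line bundle on `X ⊆ ℙ^N` by a covering of
`X` by complements of closed sets and degree-zero rational transition
functions satisfying the cocycle condition on `X`. -/
structure LineBundleData (N : ℕ) (X : Set (Proj N)) where
  ι : Type
  Z : ι → Set (Aff N)
  Zclosed : ∀ i, zClosed (Z i)
  covers : ∀ v ∈ cone X, v ≠ 0 → ∃ i, v ∉ Z i
  num : ι → ι → MvPolynomial (Fin (N + 1)) ℂ
  den : ι → ι → MvPolynomial (Fin (N + 1)) ℂ
  deg : ι → ι → ℕ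
  num_hom : ∀ i j, num i j ∈ homogeneousSubmodule (Fin (N + 1)) ℂ (deg i j)
  den_hom : ∀ i j, den i j ∈ homogeneousSubmodule (Fin (N + 1)) ℂ (deg i j)
  invertible : ∀ i j, ∀ v ∈ cone X, v ∉ Z i → v ∉ Z j →
    eval v (num i j) ≠ 0 ∧ eval v (den i j) ≠ 0
  cocycle : ∀ i j k, ∀ v ∈ cone X, v ∉ Z i → v ∉ Z j → v ∉ Z k →
    eval v (num i j) * eval v (num j k) * eval v (den i k) =
      eval v (num i k) * eval v (den i j) * eval v (den j k)

/-- The line bundle `L` is isomorphic to the `k`-th tensor power of `G`: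
on the common refinement of the two coverings, the transition functions of
`L` and the `k`-th power of those of `G` differ by a coboundary of invertible
degree-zero rational functions. -/
def PicPowerIso {N : ℕ} {X : Set (Proj N)} (L G : LineBundleData N X) (k : ℤ) : Prop :=
  ∃ a : L.ι × G.ι → MvPolynomial (Fin (N + 1)) ℂ,
  ∃ b : L.ι × G.ι → MvPolynomial (Fin (N + 1)) ℂ,
  ∃ d : L.ι × G.ι → ℕ,
    (∀ r, a r ∈ homogeneousSubmodule (Fin (N + 1)) ℂ (d r)) ∧
    (∀ r, b r ∈ homogeneousSubmodule (Fin (N + 1)) ℂ (d r)) ∧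
    (∀ i p, ∀ v ∈ cone X, v ∉ L.Z i → v ∉ G.Z p →
      eval v (a (i, p)) ≠ 0 ∧ eval v (b (i, p)) ≠ 0) ∧
    (∀ i j p q, ∀ v ∈ cone X, v ∉ L.Z i → v ∉ L.Z j → v ∉ G.Z p → v ∉ G.Z q →
      eval v (L.num i j) * eval v (b (i, p)) * eval v (a (j, q)) *
          eval v (G.den p q) ^ k.toNat * eval v (G.num p q) ^ (-k).toNat =
        eval v (L.den i j) * eval v (a (i, p)) * eval v (b (j, q)) *
          eval v (G.num p q) ^ k.toNat * eval v (G.den p q) ^ (-k).toNat)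

/-- The Picard group of `X` is cyclic: there is a line bundle of which every
line bundle is a tensor power, up to isomorphism. -/
def PicCyclic {N : ℕ} (X : Set (Proj N)) : Prop :=
  ∃ G : LineBundleData N X, ∀ L : LineBundleData N X, ∃ k : ℤ, PicPowerIso L G k

/-- `X` can be isomorphically projected into `ℙ^M`: there is a linear
projection which is injective on the points of `X` and on its embedded
tangent spaces. -/
def IsoProjectableTo {N : ℕ} (X : Set (Proj N)) (M : ℕ) : Prop :=
  ∃ π : (Aff N) →ₗ[ℂ] (Aff M),
    (∀ v ∈ cone X, v ≠ 0 → π v ≠ 0) ∧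
    (∀ v ∈ cone X, ∀ w ∈ cone X, v ≠ 0 → w ≠ 0 →
      Submodule.span ℂ {π v} = Submodule.span ℂ {π w} →
      Submodule.span ℂ {v} = Submodule.span ℂ {w}) ∧
    (∀ x ∈ X, projTangent X x ⊓ LinearMap.ker π = ⊥)

end

open Filter Topology

/-! ### A limit argument for families of graphs -/

/-- A linear version of Hurwitz's theorem. If on the ball of radius `ρ` about `y₁` the vector `C y`
never vanishes and is controlled by its component `φ (C y)`, then the linear form `φ ∘ C` has no zero
on that ball, so it varies there by at most `‖φ (C y₁)‖`; hence `‖C‖` is controlled by the single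
value `C y₁`. -/
lemma linear_hurwitz {E : Type*} [NormedAddCommGroup E] [NormedSpace ℂ E]
    (C : E →L[ℂ] E) (φ : E →L[ℂ] ℂ) {c ρ : ℝ} (hc : 0 ≤ c) (hρ : 0 < ρ) (y₁ : E)
    (h : ∀ y, ‖y - y₁‖ < ρ → φ (C y) ≠ 0 ∧ ‖C y‖ ≤ c * ‖φ (C y)‖) :
    ρ * ‖C‖ ≤ 2 * (1 + 2 * c * ‖φ‖) * ‖C y₁‖ := by
  have h1 : ∀ v : E, ‖v‖ < 1 → ρ * ‖φ (C v)‖ ≤ ‖φ (C y₁)‖ := by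
    intro v hv
    by_contra! hlt
    have hne : φ (C v) ≠ 0 := by
      intro h0
      rw [h0] at hlt
      simp at hlt
      exact absurd hlt (not_lt.mpr (norm_nonneg _))
    -- the zero of the linear form `φ ∘ C` on the line `y₁ + ℂ v`
    refine (h (y₁ + (-(φ (C y₁)) / φ (C v)) • v) ?_).1 ?_
    · rw [add_sub_cancel_left, norm_smul, norm_div, norm_neg]
      have h2 : ‖φ (C y₁)‖ / ‖φ (C v)‖ < ρ := by
        rw [div_lt_iff₀ (norm_pos_iff.mpr hne)]; exact hlt
      calc _ ≤ ‖φ (C y₁)‖ / ‖φ (C v)‖ * 1 := by gcongr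
        _ < ρ := by simpa using h2
    · simp only [map_add, map_smul, smul_eq_mul]
      field_simp
      ring
  have h2 : ∀ v : E, ‖v‖ < 1 → ρ * ‖C v‖ ≤ (1 + 2 * c * ‖φ‖) * ‖C y₁‖ := by
    intro v hv
    have hb := (h (y₁ + (ρ : ℂ) • v) (by
      rw [add_sub_cancel_left, norm_smul, Complex.norm_real, Real.norm_of_nonneg hρ.le]
      nlinarith)).2
    have h3 : ‖φ (C (y₁ + (ρ : ℂ) • v))‖ ≤ ‖φ (C y₁)‖ + ρ * ‖φ (C v)‖ := by
      simp only [map_add, map_smul]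
      refine (norm_add_le _ _).trans ?_
      rw [norm_smul, Complex.norm_real, Real.norm_of_nonneg hρ.le]
    have h4 : ρ * ‖C v‖ ≤ ‖C (y₁ + (ρ : ℂ) • v)‖ + ‖C y₁‖ := by
      have : (ρ : ℂ) • C v = C (y₁ + (ρ : ℂ) • v) - C y₁ := by simp
      calc ρ * ‖C v‖ = ‖(ρ : ℂ) • C v‖ := by
            rw [norm_smul, Complex.norm_real, Real.norm_of_nonneg hρ.le]
        _ ≤ _ := by rw [this]; exact norm_sub_le _ _
    have h5 := h1 v hv
    have h6 : ‖φ (C y₁)‖ ≤ ‖φ‖ * ‖C y₁‖ := φ.le_opNorm _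
    have h7 : c * ‖φ (C (y₁ + (ρ : ℂ) • v))‖ ≤ c * (2 * (‖φ‖ * ‖C y₁‖)) := by
      gcongr; linarith
    linarith
  rw [← le_div_iff₀' hρ]
  refine C.opNorm_le_bound (by positivity) fun v => ?_
  by_cases hv : v = 0
  · simp [hv]
  have hvp : 0 < ‖v‖ := norm_pos_iff.mpr hv
  have h3 := h2 (((2 * ‖v‖ : ℝ) : ℂ)⁻¹ • v) (by
    rw [norm_smul, norm_inv, Complex.norm_real, Real.norm_of_nonneg (by positivity)]
    field_simp; norm_num)
  rw [map_smul, norm_smul, norm_inv, Complex.norm_real, Real.norm_of_nonneg (by positivity)] at h3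
  rw [div_mul_eq_mul_div, le_div_iff₀ hρ]
  field_simp at h3
  linarith

/-- If the continuously varying linear forms `g j y`, together with `φ`, have
no common non-zero zero at `y = y₀`, then finitely many of them, together with `φ`, bound the norm
uniformly for `y` near `y₀`. -/
lemma uniform_injectivity {E J : Type*} [NormedAddCommGroup E] [NormedSpace ℂ E]
    [FiniteDimensional ℂ E] (g : J → E → (E →L[ℂ] ℂ)) (hg : ∀ j, Continuous (g j))
    (y₀ : E) (φ : E →L[ℂ] ℂ) (h : ∀ z, φ z = 0 → (∀ j, g j y₀ z = 0) → z = 0) :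
    ∃ s : Finset J, ∃ c : ℝ, 0 ≤ c ∧ ∀ᶠ y in 𝓝 y₀, ∀ z,
      ‖z‖ ≤ c * (‖φ z‖ + ∑ j ∈ s, ‖g j y z‖) := by
  classical
  have : ProperSpace E := FiniteDimensional.proper ℂ E
  have key : ∃ s : Finset J, ∃ c : ℝ, 0 ≤ c ∧ ∀ᶠ y in 𝓝 y₀,
      ∀ z ∈ Metric.sphere (0 : E) 1, 1 ≤ c * (‖φ z‖ + ∑ j ∈ s, ‖g j y z‖) := by
    refine (isCompact_sphere (0 : E) 1).induction_on
      (p := fun S => ∃ s : Finset J, ∃ c : ℝ, 0 ≤ c ∧ ∀ᶠ y in 𝓝 y₀,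
        ∀ z ∈ S, 1 ≤ c * (‖φ z‖ + ∑ j ∈ s, ‖g j y z‖)) ?_ ?_ ?_ ?_
    · exact ⟨∅, 0, le_rfl, by simp⟩
    · rintro S T hST ⟨s, c, hc, hs⟩
      exact ⟨s, c, hc, hs.mono fun y hy z hz => hy z (hST hz)⟩
    · rintro S T ⟨s, c, hc, hs⟩ ⟨t, d, hd, ht⟩
      refine ⟨s ∪ t, max c d, le_max_of_le_left hc, ?_⟩
      filter_upwards [hs, ht] with y hy hy' z hz
      have e1 : ∑ j ∈ s, ‖g j y z‖ ≤ ∑ j ∈ s ∪ t, ‖g j y z‖ :=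
        Finset.sum_le_sum_of_subset_of_nonneg Finset.subset_union_left
          fun _ _ _ => norm_nonneg _
      have e2 : ∑ j ∈ t, ‖g j y z‖ ≤ ∑ j ∈ s ∪ t, ‖g j y z‖ :=
        Finset.sum_le_sum_of_subset_of_nonneg Finset.subset_union_right
          fun _ _ _ => norm_nonneg _
      have e0 : 0 ≤ ∑ j ∈ s ∪ t, ‖g j y z‖ := Finset.sum_nonneg fun _ _ => norm_nonneg _
      rcases hz with hz | hz
      · refine (hy z hz).trans ?_
        gcongr
        exact le_max_left _ _
      · refine (hy' z hz).trans ?_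
        gcongr
        exact le_max_right _ _
    · intro z hz
      have hz0 : z ≠ 0 := by
        rintro rfl; simp at hz
      -- Some finite sum of the forms below is non-zero at `(y₀, z)`
      obtain ⟨s, hs⟩ : ∃ s : Finset J, 0 < ‖φ z‖ + ∑ j ∈ s, ‖g j y₀ z‖ := by
        by_cases hφ : φ z = 0
        · have : ∃ j, g j y₀ z ≠ 0 := by
            by_contra! hall
            exact hz0 (h z hφ hall)
          obtain ⟨j, hj⟩ := this
          exact ⟨{j}, by simp [hφ, hj]⟩
        · exact ⟨∅, by simp [hφ]⟩
      set G : E × E → ℝ := fun q => ‖φ q.2‖ + ∑ j ∈ s, ‖g j q.1 q.2‖ with hG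
      have hGc : Continuous G := by
        have hgj : ∀ j, Continuous fun q : E × E => g j q.1 q.2 := fun j =>
          ((hg j).comp continuous_fst).clm_apply continuous_snd
        fun_prop
      have hev : ∀ᶠ q in 𝓝 (y₀, z), G (y₀, z) / 2 < G q :=
        hGc.continuousAt.eventually (lt_mem_nhds (half_lt_self hs))
      rw [nhds_prod_eq] at hev
      obtain ⟨pa, ha, pb, hb, hab⟩ := eventually_prod_iff.mp hev
      refine ⟨{z' | pb z'}, mem_nhdsWithin_of_mem_nhds hb, s, (G (y₀, z) / 2)⁻¹,
        by have := hs.le; positivity, ha.mono fun y hy z' hz' => ?_⟩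
      have h1 := hab hy hz'
      have h2 : 0 < G (y₀, z) / 2 := half_pos hs
      rw [inv_mul_eq_div, le_div_iff₀ h2, one_mul]
      exact h1.le
  obtain ⟨s, c, hc, hs⟩ := key
  refine ⟨s, c, hc, hs.mono fun y hy z => ?_⟩
  by_cases hz : z = 0
  · simp [hz]
  have hzp : 0 < ‖z‖ := norm_pos_iff.mpr hz
  have h1 := hy (((‖z‖ : ℝ) : ℂ)⁻¹ • z) (by simp [norm_smul, hz])
  simp only [map_smul, norm_smul, norm_inv, Complex.norm_real, norm_norm, ← Finset.mul_sum,
    ← mul_add] at h1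
  rw [← mul_assoc, mul_comm c, mul_assoc, inv_mul_eq_div, le_div_iff₀ hzp, one_mul] at h1
  exact h1

/-- Local data of a cone `V` in `ℂⁿ × ℂⁿ` along the linear space `{x = 0}` contained in it: the
linear forms `g j y` on `{y = 0}` stand for the differentials at `(0, y)` of the equations of `V`,
restricted to the directions normal to `{x = 0}`. They vanish on `V` to second order in `x`
(`g_bound`), and for `y ≠ 0` their common kernel is at most a line (`line`; it says that the tangent
space of `V` at `(0, y)` has dimension at most `n + 1`). -/
structure FibreGerm (n : ℕ) where
  J : Type
  V : Set ((Fin n → ℂ) × (Fin n → ℂ))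
  smul_mem : ∀ (a : ℂ) x y, (x, y) ∈ V → (a • x, a • y) ∈ V
  g : J → (Fin n → ℂ) → ((Fin n → ℂ) →L[ℂ] ℂ)
  g_cont : ∀ j, Continuous (g j)
  g_bound : ∀ j R, ∃ K : ℝ, 0 ≤ K ∧ ∀ x y, ‖x‖ ≤ R → ‖y‖ ≤ R → (x, y) ∈ V →
    ‖g j y x‖ ≤ K * ‖x‖ ^ 2
  line : ∀ y, y ≠ 0 → ∃ φ : (Fin n → ℂ) →L[ℂ] ℂ, ∀ z, φ z = 0 → (∀ j, g j y z = 0) → z = 0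

namespace FibreGerm
variable {n : ℕ} (D : FibreGerm n)

/-- Near `y₀`, finitely many of the forms `g j y`, together with a form `φ` detecting their common
kernel at `y₀`, control the norm, while on `V` these forms are of second order in `x`. -/
lemma uniform (y₀ : Fin n → ℂ) (φ : (Fin n → ℂ) →L[ℂ] ℂ)
    (hφ : ∀ z, φ z = 0 → (∀ j, D.g j y₀ z = 0) → z = 0) :
    ∃ s : Finset D.J, ∃ c K r : ℝ, 0 ≤ c ∧ 0 ≤ K ∧ 0 < r ∧ r ≤ 1 ∧
      ∀ y, ‖y - y₀‖ < r → (∀ z, ‖z‖ ≤ c * (‖φ z‖ + ∑ j ∈ s, ‖D.g j y z‖)) ∧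
        ∀ x, ‖x‖ < r → (x, y) ∈ D.V → ∑ j ∈ s, ‖D.g j y x‖ ≤ K * ‖x‖ ^ 2 := by
  obtain ⟨s, c, hc, hs⟩ := uniform_injectivity D.g D.g_cont y₀ φ hφ
  obtain ⟨r, hr, hrs⟩ := Metric.eventually_nhds_iff.mp hs
  choose K hK hKb using fun j => D.g_bound j (‖y₀‖ + 1)
  refine ⟨s, c, ∑ j ∈ s, K j, min r 1, hc, Finset.sum_nonneg fun j _ => hK j,
    lt_min hr one_pos, min_le_right _ _, fun y hy => ⟨hrs ?_, fun x hx hV => ?_⟩⟩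
  · rw [dist_eq_norm]; exact hy.trans_le (min_le_left _ _)
  · rw [Finset.sum_mul]
    refine Finset.sum_le_sum fun j _ => hKb j x y ?_ ?_ hV
    · have := hx.le.trans (min_le_right _ _)
      linarith [norm_nonneg y₀]
    · have h1 := hy.le.trans (min_le_right _ _)
      have h2 : ‖y‖ ≤ ‖y - y₀‖ + ‖y₀‖ := by simpa using norm_add_le (y - y₀) y₀
      linarith

/-- Near `(0, y₀)` with `y₀ ≠ 0`, the normal coordinate `x` of a point of `V` is controlled by a
single one of its components. -/
lemma local_estimate (y₀ : Fin n → ℂ) (hy₀ : y₀ ≠ 0) :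
    ∃ φ : (Fin n → ℂ) →L[ℂ] ℂ, ∃ c r : ℝ, 0 ≤ c ∧ 0 < r ∧ r ≤ ‖y₀‖ ∧
      ∀ x y, ‖x‖ < r → ‖y - y₀‖ < r → (x, y) ∈ D.V → ‖x‖ ≤ c * ‖φ x‖ := by
  obtain ⟨φ, hφ⟩ := D.line y₀ hy₀
  obtain ⟨s, c, K, r, hc, hK, hr, -, h⟩ := D.uniform y₀ φ hφ
  have hy₀p := norm_pos_iff.mpr hy₀
  refine ⟨φ, 2 * c, min (min r (2 * (c * K + 1))⁻¹) ‖y₀‖, by positivity, by positivity,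
    min_le_right _ _, fun x y hx hy hV => ?_⟩
  replace hx := hx.trans_le (min_le_left _ _)
  replace hy := hy.trans_le (min_le_left _ _)
  obtain ⟨h1, h2⟩ := h y (hy.trans_le (min_le_left _ _))
  have h3 := h1 x
  have h4 := h2 x (hx.trans_le (min_le_left _ _)) hV
  have h5 : ‖x‖ * (2 * (c * K + 1)) ≤ 1 := by
    have := hx.le.trans (min_le_right _ _)
    rwa [← one_div, le_div_iff₀ (by positivity)] at this
  have h6 : c * ∑ j ∈ s, ‖D.g j y x‖ ≤ c * (K * ‖x‖ ^ 2) := by gcongr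
  have h7 : ‖x‖ * (‖x‖ * (2 * (c * K + 1))) ≤ ‖x‖ * 1 := by gcongr
  nlinarith [norm_nonneg x, sq_nonneg ‖x‖]

/-- Let `𝒞` be a family of injective linear maps whose graphs `x = C y` lie in `V`. If these graphs
accumulate at one point `(0, y₀)` with `y₀ ≠ 0`, then they converge to the whole space `{x = 0}`:
`𝒞` contains maps of arbitrarily small norm. -/
lemma exists_small (𝒞 : Set ((Fin n → ℂ) →L[ℂ] (Fin n → ℂ)))
    (hinj : ∀ C ∈ 𝒞, ∀ y, C y = 0 → y = 0) (hV : ∀ C ∈ 𝒞, ∀ y, (C y, y) ∈ D.V)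
    (y₀ : Fin n → ℂ) (hy₀ : y₀ ≠ 0)
    (hacc : ∀ ε > 0, ∃ C ∈ 𝒞, ∃ y, ‖y - y₀‖ < ε ∧ ‖C y‖ < ε) :
    ∀ ε > 0, ∃ C ∈ 𝒞, ‖C‖ < ε := by
  intro ε hε
  obtain ⟨φ, c, r, hc, hr, hry, h⟩ := D.local_estimate y₀ hy₀
  have hy₀p := norm_pos_iff.mpr hy₀
  set c' := 2 * (1 + 2 * c * ‖φ‖) with hc'
  have hc'p : 0 < c' := by positivity
  set ε' := min ε 1 with hε'
  have hε'p : 0 < ε' := by positivity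
  obtain ⟨C, hC, y₁, hy₁, hCy⟩ := hacc (min (r / 4) (r / 4 * ε' / c')) (by positivity)
  refine ⟨C, hC, ?_⟩
  have hy₁' := hy₁.trans_le (min_le_left _ _)
  have hCy1 := hCy.trans_le (min_le_left _ _)
  have hCy2 := hCy.trans_le (min_le_right _ _)
  rw [lt_div_iff₀ hc'p] at hCy2
  -- on the ball of this radius, `C y` stays in the range of the local estimate
  set ρ := r / 4 * (max 1 ‖C‖)⁻¹ with hρ
  have hm : 0 < max 1 ‖C‖ := by positivity
  have hρp : 0 < ρ := by positivity
  have hρr : ρ ≤ r / 4 := by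
    have : (max 1 ‖C‖)⁻¹ ≤ 1 := inv_le_one_of_one_le₀ (le_max_left _ _)
    nlinarith
  have hρC : ρ * ‖C‖ ≤ r / 4 := by
    have : (max 1 ‖C‖)⁻¹ * ‖C‖ ≤ 1 := by
      rw [inv_mul_le_iff₀ hm]; simp
    rw [hρ, mul_assoc]; nlinarith
  have key := linear_hurwitz C φ hc hρp y₁ (by
    intro y hy
    have h1 : ‖y - y₀‖ < r := by
      have := norm_add_le (y - y₁) (y₁ - y₀)
      rw [sub_add_sub_cancel] at this
      linarith
    have h2 : ‖C y‖ < r := by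
      have h3 : C y = C (y - y₁) + C y₁ := by simp
      have h4 := norm_add_le (C (y - y₁)) (C y₁)
      have h5 : ‖C (y - y₁)‖ ≤ ‖C‖ * ρ := (C.le_opNorm _).trans (by gcongr)
      rw [h3]
      linarith
    have h6 := h (C y) y h2 h1 (hV C hC y)
    refine ⟨fun h0 => ?_, h6⟩
    rw [h0, norm_zero, mul_zero, norm_le_zero_iff] at h6
    rw [hinj C hC y h6, zero_sub, norm_neg] at h1
    linarith)
  rw [← hc'] at key
  have h1 : ρ * ‖C‖ < r / 4 * ε' := by linarith
  have h2 : (max 1 ‖C‖)⁻¹ * ‖C‖ < ε' := by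
    rw [hρ, mul_assoc] at h1
    exact lt_of_mul_lt_mul_left h1 (by positivity)
  rw [inv_mul_lt_iff₀ hm] at h2
  rcases le_total ‖C‖ 1 with h3 | h3
  · rw [max_eq_left h3] at h2
    linarith [min_le_left ε 1]
  · rw [max_eq_right h3] at h2
    nlinarith [min_le_right ε 1]

/-- If the injective maps `C ∈ 𝒞` with graphs `x = C y` in `V` may have arbitrarily small norm, then
a limit `B` of the normalized maps `C / ‖C‖` is injective and every `B y` is a common zero of the
forms `g j y`. Thus `B y` spans the normal direction of the tangent space of `V` at `(0, y)`; the
injectivity is again the argument of Hurwitz. -/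
lemma exists_limit [NeZero n] (𝒞 : Set ((Fin n → ℂ) →L[ℂ] (Fin n → ℂ)))
    (hinj : ∀ C ∈ 𝒞, ∀ y, C y = 0 → y = 0) (hV : ∀ C ∈ 𝒞, ∀ y, (C y, y) ∈ D.V)
    (hsmall : ∀ ε > 0, ∃ C ∈ 𝒞, ‖C‖ < ε) :
    ∃ B : (Fin n → ℂ) →L[ℂ] (Fin n → ℂ), (∀ y, B y = 0 → y = 0) ∧
      ∀ j y, D.g j y (B y) = 0 := by
  choose C hC hCn using fun k : ℕ => hsmall (1 / ((k : ℝ) + 1)) (by positivity)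
  have hC0 : Tendsto (fun k => ‖C k‖) atTop (𝓝 0) :=
    squeeze_zero (fun _ => norm_nonneg _) (fun k => (hCn k).le)
      tendsto_one_div_add_atTop_nhds_zero_nat
  have hCp : ∀ k, 0 < ‖C k‖ := by
    intro k
    rw [norm_pos_iff]
    intro h0
    have : (1 : Fin n → ℂ) = 0 := hinj (C k) (hC k) 1 (by simp [h0])
    exact one_ne_zero this
  have : ProperSpace ((Fin n → ℂ) →L[ℂ] (Fin n → ℂ)) := FiniteDimensional.proper ℂ _
  set T : ℕ → ((Fin n → ℂ) →L[ℂ] (Fin n → ℂ)) := fun k => ((‖C k‖ : ℝ) : ℂ)⁻¹ • C k with hT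
  obtain ⟨B, hB, σ, hσ, hlim⟩ := (isCompact_sphere
    (0 : (Fin n → ℂ) →L[ℂ] (Fin n → ℂ)) 1).tendsto_subseq (x := T) (by
      intro k
      simp [hT, norm_smul, (hCp k).ne'])
  have hB1 : ‖B‖ = 1 := by simpa using hB
  have hlimy : ∀ y, Tendsto (fun k => T (σ k) y) atTop (𝓝 (B y)) := fun y =>
    ((ContinuousLinearMap.apply ℂ (Fin n → ℂ) y).continuous.tendsto B).comp hlim
  have hTn : ∀ k y, ‖T k y‖ = ‖C k‖⁻¹ * ‖C k y‖ := fun k y => by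
    simp [hT, norm_smul]
  have hCσ : Tendsto (fun k => ‖C (σ k)‖) atTop (𝓝 0) := hC0.comp hσ.tendsto_atTop
  refine ⟨B, fun y₀ hBy => ?_, fun j y => ?_⟩
  · by_contra hy₀
    obtain ⟨φ, c, r, hc, hr, hry, h⟩ := D.local_estimate y₀ hy₀
    have hev : ∀ᶠ k in atTop, r * 1 ≤ 2 * (1 + 2 * c * ‖φ‖) * ‖T (σ k) y₀‖ := by
      have hsm : ∀ᶠ k in atTop, ‖C (σ k)‖ < r / (‖y₀‖ + r) :=
        hCσ.eventually (gt_mem_nhds (by positivity))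
      filter_upwards [hsm] with k hk
      have key := linear_hurwitz (C (σ k)) φ hc hr y₀ (by
        intro y hy
        have h2 : ‖C (σ k) y‖ < r := by
          have h3 : ‖y‖ ≤ ‖y₀‖ + r := by
            have := norm_add_le (y - y₀) y₀
            rw [sub_add_cancel] at this
            linarith
          rw [lt_div_iff₀ (by positivity)] at hk
          calc _ ≤ ‖C (σ k)‖ * ‖y‖ := (C (σ k)).le_opNorm _
            _ ≤ ‖C (σ k)‖ * (‖y₀‖ + r) := by gcongr
            _ < r := hk
        have h6 := h _ y h2 hy (hV _ (hC _) y)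
        refine ⟨fun h0 => ?_, h6⟩
        rw [h0, norm_zero, mul_zero, norm_le_zero_iff] at h6
        rw [hinj _ (hC _) y h6, zero_sub, norm_neg] at hy
        linarith)
      rw [hTn]
      have hp := hCp (σ k)
      field_simp
      linarith
    have hl : Tendsto (fun k => 2 * (1 + 2 * c * ‖φ‖) * ‖T (σ k) y₀‖) atTop (𝓝 0) := by
      have := ((hlimy y₀).norm).const_mul (2 * (1 + 2 * c * ‖φ‖))
      simpa [hBy] using this
    have := ge_of_tendsto hl hev
    linarith
  · obtain ⟨K, hK, hKb⟩ := D.g_bound j (‖y‖ + 1)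
    have hsm : ∀ᶠ k in atTop, ‖C (σ k)‖ < 1 / (‖y‖ + 1) :=
      hCσ.eventually (gt_mem_nhds (by positivity))
    have hlim1 : Tendsto (fun k => ‖D.g j y (T (σ k) y)‖) atTop (𝓝 ‖D.g j y (B y)‖) :=
      (((D.g j y).continuous.tendsto _).comp (hlimy y)).norm
    have hlim2 : Tendsto (fun k => K * ‖y‖ ^ 2 * ‖C (σ k)‖) atTop (𝓝 0) := by
      simpa using hCσ.const_mul (K * ‖y‖ ^ 2)
    have hle : ∀ᶠ k in atTop, ‖D.g j y (T (σ k) y)‖ ≤ K * ‖y‖ ^ 2 * ‖C (σ k)‖ := by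
      filter_upwards [hsm] with k hk
      have hp := hCp (σ k)
      have h1 : ‖C (σ k) y‖ ≤ ‖C (σ k)‖ * ‖y‖ := (C (σ k)).le_opNorm _
      rw [lt_div_iff₀ (by positivity)] at hk
      have h2 := hKb (C (σ k) y) y (by nlinarith [norm_nonneg y]) (by linarith) (hV _ (hC _) y)
      have h3 : ‖D.g j y (T (σ k) y)‖ = ‖C (σ k)‖⁻¹ * ‖D.g j y (C (σ k) y)‖ := by
        simp [hT]
      rw [h3, inv_mul_le_iff₀ hp]
      calc _ ≤ K * ‖C (σ k) y‖ ^ 2 := h2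
        _ ≤ K * (‖C (σ k)‖ * ‖y‖) ^ 2 := by gcongr
        _ = _ := by ring
    have := le_of_tendsto_of_tendsto hlim1 hlim2 hle
    simpa using this

/-- The coordinates of `x ∧ B y` are of second order in `x` on all of `V`, uniformly in `y`: by the
conical structure `y` may be restricted to the unit sphere, where `B y` spans the common kernel of
the forms `g j y`. -/
lemma wedge_bound (B : (Fin n → ℂ) →L[ℂ] (Fin n → ℂ)) (hB : ∀ y, B y = 0 → y = 0)
    (hBg : ∀ j y, D.g j y (B y) = 0) (i k : Fin n) :
    ∃ K : ℝ, ∀ x y, (x, y) ∈ D.V → ‖x i * B y k - x k * B y i‖ ≤ K * ‖x‖ ^ 2 := by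
  have triv : ∀ x y : Fin n → ℂ, ‖x i * B y k - x k * B y i‖ ≤ 2 * (‖x‖ * (‖B‖ * ‖y‖)) := by
    intro x y
    have h0 : ∀ a b : Fin n, ‖x a * B y b‖ ≤ ‖x‖ * (‖B‖ * ‖y‖) := fun a b => by
      rw [norm_mul]
      exact mul_le_mul (norm_le_pi_norm x a) ((norm_le_pi_norm (B y) b).trans (B.le_opNorm y))
        (norm_nonneg _) (norm_nonneg _)
    exact (norm_sub_le _ _).trans (by linarith [h0 i k, h0 k i])
  have key : ∃ K : ℝ, 0 ≤ K ∧ ∀ x : Fin n → ℂ, ∀ y ∈ Metric.sphere (0 : Fin n → ℂ) 1, (x, y) ∈ D.V →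
      ‖x i * B y k - x k * B y i‖ ≤ K * ‖x‖ ^ 2 := by
    refine (isCompact_sphere (0 : Fin n → ℂ) 1).induction_on
      (p := fun S => ∃ K : ℝ, 0 ≤ K ∧ ∀ x : Fin n → ℂ, ∀ y ∈ S, (x, y) ∈ D.V →
        ‖x i * B y k - x k * B y i‖ ≤ K * ‖x‖ ^ 2) ⟨0, le_rfl, by simp⟩ ?_ ?_ ?_
    · rintro S T hST ⟨K, hK, h⟩
      exact ⟨K, hK, fun x y hy => h x y (hST hy)⟩
    · rintro S T ⟨K, hK, hS⟩ ⟨L, hL, hT⟩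
      refine ⟨K + L, by positivity, fun x y hy hV => ?_⟩
      have := sq_nonneg ‖x‖
      rcases hy with hy | hy
      · nlinarith [hS x y hy hV]
      · nlinarith [hT x y hy hV]
    · intro y₀ hy₀
      have hy₀n : y₀ ≠ 0 := by rintro rfl; simp at hy₀
      obtain ⟨φ, hφ⟩ := D.line y₀ hy₀n
      have hφB : φ (B y₀) ≠ 0 := fun h0 =>
        hy₀n (hB _ (hφ _ h0 fun j => hBg j y₀))
      obtain ⟨s, c, K, r, hc, hK, hr, hr1, h⟩ := D.uniform y₀ φ hφ
      have hev : ∀ᶠ y in 𝓝 y₀, φ (B y) ≠ 0 :=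
        (φ.continuous.comp B.continuous).continuousAt.eventually_ne hφB
      have hev2 : ∀ᶠ y in 𝓝 y₀, ‖y - y₀‖ < r := by
        filter_upwards [Metric.ball_mem_nhds y₀ hr] with y hy
        rwa [Metric.mem_ball, dist_eq_norm] at hy
      refine ⟨_, mem_nhdsWithin_of_mem_nhds (hev.and hev2),
        2 * (c * K * (‖B‖ * (‖y₀‖ + 1))) + 2 * (‖B‖ * (‖y₀‖ + 1)) / r, by positivity, ?_⟩
      rintro x y ⟨hy1, hy2⟩ hV
      have hyn : ‖y‖ ≤ ‖y₀‖ + 1 := by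
        have := norm_add_le (y - y₀) y₀
        rw [sub_add_cancel] at this
        linarith
      rw [add_mul]
      rcases lt_or_ge ‖x‖ r with hx | hx
      · -- the component of `x` along `ker φ`, modulo `B y`, is of second order
        set z := x - (φ x / φ (B y)) • B y with hz
        have hφz : φ z = 0 := by simp [hz, hy1]
        obtain ⟨h1, h2⟩ := h y hy2
        have h3 := h1 z
        have h4 : ∀ j, D.g j y z = D.g j y x := fun j => by simp [hz, hBg]
        simp only [h4, hφz, norm_zero, zero_add] at h3
        have h5 : ‖z‖ ≤ c * (K * ‖x‖ ^ 2) := h3.trans (by gcongr; exact h2 x hx hV)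
        have h6 : x i * B y k - x k * B y i = z i * B y k - z k * B y i := by
          simp [hz]; ring
        rw [h6]
        have h7 : 0 ≤ 2 * (‖B‖ * (‖y₀‖ + 1)) / r * ‖x‖ ^ 2 := by positivity
        have h8 : ‖z‖ * (‖B‖ * ‖y‖) ≤ c * (K * ‖x‖ ^ 2) * (‖B‖ * (‖y₀‖ + 1)) := by gcongr
        nlinarith [triv z y]
      · have h7 : 0 ≤ 2 * (c * K * (‖B‖ * (‖y₀‖ + 1))) * ‖x‖ ^ 2 := by positivity
        have h8 : ‖x‖ * (‖B‖ * ‖y‖) ≤ ‖x‖ * (‖B‖ * (‖y₀‖ + 1)) := by gcongr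
        have h9 : ‖x‖ * (‖B‖ * (‖y₀‖ + 1)) ≤ (‖B‖ * (‖y₀‖ + 1)) / r * ‖x‖ ^ 2 := by
          rw [div_mul_eq_mul_div, le_div_iff₀ hr]
          have : 0 ≤ ‖x‖ * (‖B‖ * (‖y₀‖ + 1)) := by positivity
          nlinarith
        have h10 : 2 * (‖B‖ * (‖y₀‖ + 1)) / r * ‖x‖ ^ 2
          = 2 * ((‖B‖ * (‖y₀‖ + 1)) / r * ‖x‖ ^ 2) := by ring
        linarith [triv x y]
  obtain ⟨K, hK, h⟩ := key
  refine ⟨K, fun x y hV => ?_⟩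
  by_cases hy : y = 0
  · subst hy
    simp only [map_zero, Pi.zero_apply, mul_zero, sub_zero, norm_zero]
    positivity
  have hyp : 0 < ‖y‖ := norm_pos_iff.mpr hy
  set a : ℂ := ((‖y‖ : ℝ) : ℂ)⁻¹ with ha
  have han : ‖a‖ = ‖y‖⁻¹ := by simp [ha]
  have h1 := h (a • x) (a • y) (by simp [norm_smul, han, hy]) (D.smul_mem a x y hV)
  have h2 : (a • x) i * B (a • y) k - (a • x) k * B (a • y) i
      = a ^ 2 * (x i * B y k - x k * B y i) := by
    simp; ring
  rw [h2, norm_mul, norm_pow, norm_smul, han, mul_pow] at h1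
  have h3 : 0 < ‖y‖⁻¹ ^ 2 := by positivity
  refine le_of_mul_le_mul_left (h1.trans_eq ?_) h3
  ring

end FibreGerm

/-! ### Zariski-closed sets, differentials and tangent spaces -/

lemma zClosed_union {N : ℕ} {V W : Set (Aff N)} (hV : zClosed V) (hW : zClosed W) :
    zClosed (V ∪ W) := by
  obtain ⟨S, rfl⟩ := hV
  obtain ⟨T, rfl⟩ := hW
  refine ⟨{r | ∃ p ∈ S, ∃ q ∈ T, r = p * q}, ?_⟩
  ext x
  simp only [Set.mem_union, Set.mem_ofPred_eq]
  constructor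
  · rintro (h | h) r ⟨p, hp, q, hq, rfl⟩
    · simp [h p hp]
    · simp [h q hq]
  · intro h
    by_contra! hne
    obtain ⟨⟨p, hp, hpx⟩, q, hq, hqx⟩ := hne
    have := h _ ⟨p, hp, q, hq, rfl⟩
    rw [map_mul] at this
    exact (mul_ne_zero hpx hqx) this

lemma zClosed_inter {N : ℕ} {V W : Set (Aff N)} (hV : zClosed V) (hW : zClosed W) :
    zClosed (V ∩ W) := by
  obtain ⟨S, rfl⟩ := hV
  obtain ⟨T, rfl⟩ := hW
  refine ⟨S ∪ T, ?_⟩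
  ext x
  simp only [Set.mem_inter_iff, Set.mem_ofPred_eq, Set.mem_union]
  exact ⟨fun h p hp => hp.elim (h.1 p) (h.2 p), fun h => ⟨fun p hp => h p (.inl hp),
    fun p hp => h p (.inr hp)⟩⟩

lemma zClosed_biUnion {N : ℕ} {ι : Type*} (s : Finset ι) (C : ι → Set (Aff N))
    (hC : ∀ i ∈ s, zClosed (C i)) : zClosed (⋃ i ∈ s, C i) := by
  classical
  induction s using Finset.induction_on with
  | empty => exact ⟨{1}, by simp⟩
  | insert a s ha ih =>
    rw [Finset.set_biUnion_insert]
    exact zClosed_union (hC a (Finset.mem_insert_self _ _))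
      (ih fun i hi => hC i (Finset.mem_insert_of_mem hi))

lemma zIrred.subset_of_finite {N : ℕ} {V : Set (Aff N)} (hV : zIrred V) {ι : Type*}
    (s : Finset ι) (C : ι → Set (Aff N)) (hC : ∀ i ∈ s, zClosed (C i))
    (h : V ⊆ ⋃ i ∈ s, C i) : ∃ i ∈ s, V ⊆ C i := by
  classical
  induction s using Finset.induction_on with
  | empty =>
    obtain ⟨v, hv⟩ := hV.1
    simpa using h hv
  | insert a s ha ih =>
    rw [Finset.set_biUnion_insert] at h
    have hC' : ∀ i ∈ s, zClosed (C i) := fun i hi => hC i (Finset.mem_insert_of_mem hi)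
    rcases hV.2 _ _ (hC a (Finset.mem_insert_self _ _)) (zClosed_biUnion s C hC') h with h | h
    · exact ⟨a, Finset.mem_insert_self _ _, h⟩
    · obtain ⟨i, hi, hVi⟩ := ih hC' h
      exact ⟨i, Finset.mem_insert_of_mem hi, hVi⟩

lemma zClosed.isClosed {N : ℕ} {V : Set (Aff N)} (hV : zClosed V) : IsClosed V := by
  obtain ⟨S, rfl⟩ := hV
  simp only [Set.ofPred_forall]
  exact isClosed_iInter fun p => isClosed_iInter fun _ =>
    isClosed_eq (MvPolynomial.continuous_eval p) continuous_const

lemma linear_form_eq_sum {N : ℕ} (l : Aff N →ₗ[ℂ] ℂ) (v : Aff N) :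
    l v = ∑ i, v i * l (Pi.single i 1) := by
  conv_lhs => rw [pi_eq_sum_univ' v]
  simp [map_sum]

/-- The linear form `l` as a polynomial. -/
noncomputable def linPoly {N : ℕ} (l : Aff N →ₗ[ℂ] ℂ) : MvPolynomial (Fin (N + 1)) ℂ :=
  ∑ i, C (l (Pi.single i 1)) * X i

@[simp] lemma eval_linPoly {N : ℕ} (l : Aff N →ₗ[ℂ] ℂ) (v : Aff N) :
    eval v (linPoly l) = l v := by
  rw [linear_form_eq_sum l v]
  simp [linPoly, mul_comm]

lemma polyDiff_apply {N : ℕ} (v h : Aff N) (p : MvPolynomial (Fin (N + 1)) ℂ) :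
    polyDiff v p h = ∑ i, eval v (pderiv i p) * h i := by
  simp [polyDiff]

lemma polyDiff_linPoly {N : ℕ} (l : Aff N →ₗ[ℂ] ℂ) (v h : Aff N) :
    polyDiff v (linPoly l) h = l h := by
  rw [linear_form_eq_sum l h]
  simp [polyDiff_apply, linPoly, pderiv_X, Pi.single_apply, apply_ite, mul_comm]

lemma polyDiff_mul {N : ℕ} (v h : Aff N) (p q : MvPolynomial (Fin (N + 1)) ℂ) :
    polyDiff v (p * q) h = eval v p * polyDiff v q h + eval v q * polyDiff v p h := by
  simp only [polyDiff_apply, Derivation.leibniz, smul_eq_mul, map_add, map_mul, add_mul,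
    Finset.sum_add_distrib, Finset.mul_sum]
  congr 1 <;> exact Finset.sum_congr rfl fun i _ => by ring

lemma polyDiff_add {N : ℕ} (v h : Aff N) (p q : MvPolynomial (Fin (N + 1)) ℂ) :
    polyDiff v (p + q) h = polyDiff v p h + polyDiff v q h := by
  simp [polyDiff_apply, add_mul, Finset.sum_add_distrib]

lemma polyDiff_X {N : ℕ} (v h : Aff N) (i : Fin (N + 1)) :
    polyDiff v (X i) h = h i := by
  simp [polyDiff_apply, pderiv_X, Pi.single_apply, apply_ite]

lemma exists_eval_bound {N : ℕ} (p : MvPolynomial (Fin (N + 1)) ℂ) (R : ℝ) :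
    ∃ K : ℝ, 0 ≤ K ∧ ∀ v : Aff N, ‖v‖ ≤ R → ‖eval v p‖ ≤ K := by
  obtain ⟨K, hK⟩ := (isCompact_closedBall (0 : Aff N) R).exists_bound_of_continuousOn
    (MvPolynomial.continuous_eval p).continuousOn
  exact ⟨max K 0, le_max_right _ _, fun v hv => (hK v (by simpa using hv)).trans (le_max_left _ _)⟩

/-- First-order Taylor expansion of a polynomial, with a remainder that is quadratic on bounded
sets. -/
lemma taylor_bound {N : ℕ} (p : MvPolynomial (Fin (N + 1)) ℂ) (R : ℝ) :
    ∃ K : ℝ, 0 ≤ K ∧ ∀ v h : Aff N, ‖v‖ ≤ R → ‖h‖ ≤ R →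
      ‖eval (v + h) p - eval v p - polyDiff v p h‖ ≤ K * ‖h‖ ^ 2 := by
  induction p using MvPolynomial.induction_on with
  | C a => exact ⟨0, le_rfl, fun v h _ _ => by simp [polyDiff_apply]⟩
  | add p q hp hq =>
    obtain ⟨K, hK, h1⟩ := hp
    obtain ⟨L, hL, h2⟩ := hq
    refine ⟨K + L, by positivity, fun v h hv hh => ?_⟩
    rw [polyDiff_add, map_add, map_add]
    have e : eval (v + h) p + eval (v + h) q - (eval v p + eval v q)
        - (polyDiff v p h + polyDiff v q h)
        = (eval (v + h) p - eval v p - polyDiff v p h)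
          + (eval (v + h) q - eval v q - polyDiff v q h) := by ring
    rw [e, add_mul]
    exact (norm_add_le _ _).trans (add_le_add (h1 v h hv hh) (h2 v h hv hh))
  | mul_X p i hp =>
    obtain ⟨K, hK, h1⟩ := hp
    choose L hL hLb using fun j => exists_eval_bound (pderiv j p) R
    refine ⟨K * (|R| + |R|) + ∑ j, L j, ?_, fun v h hv hh => ?_⟩
    · have : 0 ≤ ∑ j, L j := Finset.sum_nonneg fun j _ => hL j
      positivity
    · have hd : ‖polyDiff v p h‖ ≤ (∑ j, L j) * ‖h‖ := by
        rw [polyDiff_apply, Finset.sum_mul]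
        refine (norm_sum_le _ _).trans (Finset.sum_le_sum fun j _ => ?_)
        rw [norm_mul]
        exact mul_le_mul (hLb j v hv) (norm_le_pi_norm h j) (norm_nonneg _) (hL j)
      rw [polyDiff_mul, polyDiff_X]
      have e : eval (v + h) (p * X i) - eval v (p * X i)
          - (eval v p * h i + eval v (X i) * polyDiff v p h)
          = (eval (v + h) p - eval v p - polyDiff v p h) * (v i + h i)
            + polyDiff v p h * h i := by
        simp only [map_mul, eval_X, Pi.add_apply]; ring
      rw [e, add_mul]
      refine (norm_add_le _ _).trans (add_le_add ?_ ?_)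
      · rw [norm_mul, mul_right_comm]
        refine mul_le_mul (h1 v h hv hh) ?_ (norm_nonneg _) (by positivity)
        exact (norm_add_le _ _).trans (add_le_add ((norm_le_pi_norm v i).trans (hv.trans (le_abs_self R)))
          ((norm_le_pi_norm h i).trans (hh.trans (le_abs_self R))))
      · rw [norm_mul, pow_two, ← mul_assoc]
        exact mul_le_mul hd (norm_le_pi_norm h i) (norm_nonneg _)
          ((norm_nonneg _).trans hd)

lemma polyDiff_eq_zero_of_line {N : ℕ} (v h : Aff N) (p : MvPolynomial (Fin (N + 1)) ℂ)
    (hp : ∀ t : ℂ, eval (v + t • h) p = 0) : polyDiff v p h = 0 := by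
  obtain ⟨K, hK, hb⟩ := taylor_bound p (‖v‖ + ‖h‖)
  have hv : eval v p = 0 := by simpa using hp 0
  by_contra hne
  have hpos : 0 < ‖polyDiff v p h‖ := norm_pos_iff.mpr hne
  have key : ∀ t : ℝ, 0 < t → t ≤ 1 → ‖polyDiff v p h‖ ≤ t * (K * ‖h‖ ^ 2) := by
    intro t ht ht1
    have htn : ‖(t : ℂ)‖ = t := by rw [Complex.norm_real, Real.norm_of_nonneg ht.le]
    have h1 := hb v ((t : ℂ) • h) (by linarith [norm_nonneg h]) (by
      rw [norm_smul, htn]; nlinarith [norm_nonneg h, norm_nonneg v])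
    rw [hp, hv, map_smul, norm_smul, htn] at h1
    simp only [sub_zero, zero_sub, norm_neg, norm_smul, htn, mul_pow] at h1
    refine le_of_mul_le_mul_left (h1.trans_eq ?_) ht
    ring
  set M := K * ‖h‖ ^ 2
  have hM : 0 ≤ M := by positivity
  have h2 := key (min 1 (‖polyDiff v p h‖ / (2 * (M + 1)))) (by positivity) (min_le_left _ _)
  have h3 : min 1 (‖polyDiff v p h‖ / (2 * (M + 1))) * M
      ≤ ‖polyDiff v p h‖ / (2 * (M + 1)) * M := by gcongr; exact min_le_right _ _
  have h4 : ‖polyDiff v p h‖ / (2 * (M + 1)) * M < ‖polyDiff v p h‖ := by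
    rw [div_mul_eq_mul_div, div_lt_iff₀ (by positivity)]
    nlinarith
  linarith

/-- The substitution `X i ↦ a * X i`, which pulls polynomials back along the homothety `v ↦ a • v`. -/
noncomputable def scalePoly {N : ℕ} (a : ℂ) :
    MvPolynomial (Fin (N + 1)) ℂ →ₐ[ℂ] MvPolynomial (Fin (N + 1)) ℂ :=
  bind₁ fun i => C a * X i

lemma eval_scalePoly {N : ℕ} (a : ℂ) (p : MvPolynomial (Fin (N + 1)) ℂ) (v : Aff N) :
    eval v (scalePoly a p) = eval (a • v) p := by
  induction p using MvPolynomial.induction_on with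
  | C b => simp [scalePoly]
  | add p q hp hq => simp [hp, hq]
  | mul_X p i hp => rw [map_mul, map_mul, map_mul, hp]; simp [scalePoly]

lemma polyDiff_scalePoly {N : ℕ} (a : ℂ) (p : MvPolynomial (Fin (N + 1)) ℂ) (v h : Aff N) :
    polyDiff v (scalePoly a p) h = a * polyDiff (a • v) p h := by
  induction p using MvPolynomial.induction_on with
  | C b => simp [scalePoly, polyDiff_apply]
  | add p q hp hq => rw [map_add, polyDiff_add, polyDiff_add, hp, hq]; ring
  | mul_X p i hp =>
    have e : scalePoly a (X i : MvPolynomial (Fin (N + 1)) ℂ) = C a * X i := by simp [scalePoly]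
    have e2 : polyDiff v (C a : MvPolynomial (Fin (N + 1)) ℂ) h = 0 := by simp [polyDiff_apply]
    rw [map_mul, polyDiff_mul, polyDiff_mul, hp, eval_scalePoly, e, polyDiff_mul, polyDiff_X,
      polyDiff_X, e2]
    simp; ring

lemma mem_tangentAt {N : ℕ} (V : Set (Aff N)) (v h : Aff N) :
    h ∈ tangentAt V v ↔ ∀ p ∈ vanishSet V, polyDiff v p h = 0 := by
  simp [tangentAt]

lemma tangentAt_le_smul {N : ℕ} (V : Set (Aff N)) (hV : ∀ (a : ℂ), ∀ v ∈ V, a • v ∈ V)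
    (a : ℂ) (ha : a ≠ 0) (v : Aff N) : tangentAt V v ≤ tangentAt V (a • v) := by
  intro h hh
  rw [mem_tangentAt] at hh ⊢
  intro p hp
  have := hh (scalePoly a p) fun w hw => by rw [eval_scalePoly]; exact hp _ (hV a w hw)
  rw [polyDiff_scalePoly] at this
  exact (mul_eq_zero.mp this).resolve_left ha

lemma tangentAt_smul {N : ℕ} (V : Set (Aff N)) (hV : ∀ (a : ℂ), ∀ v ∈ V, a • v ∈ V)
    (a : ℂ) (ha : a ≠ 0) (v : Aff N) : tangentAt V (a • v) = tangentAt V v := by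
  refine le_antisymm ?_ (tangentAt_le_smul V hV a ha v)
  simpa [smul_smul, ha] using tangentAt_le_smul V hV a⁻¹ (inv_ne_zero ha) (a • v)

lemma tangentAt_mono {N : ℕ} {V W : Set (Aff N)} (h : V ⊆ W) (v : Aff N) :
    tangentAt V v ≤ tangentAt W v := by
  intro x hx
  rw [mem_tangentAt] at hx ⊢
  exact fun p hp => hx p fun w hw => hp w (h hw)

lemma zClosed_submodule {N : ℕ} (F : Submodule ℂ (Aff N)) : zClosed (F : Set (Aff N)) := by
  refine ⟨{p | ∃ l : Aff N →ₗ[ℂ] ℂ, F ≤ LinearMap.ker l ∧ p = linPoly l}, ?_⟩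
  ext v
  constructor
  · rintro hv p ⟨l, hl, rfl⟩
    rw [eval_linPoly]; exact hl hv
  · intro h
    by_contra hv
    obtain ⟨l, hl, hF⟩ := Submodule.exists_le_ker_of_notMem hv
    exact hl (by rw [← eval_linPoly]; exact h _ ⟨l, hF, rfl⟩)

lemma tangentAt_submodule_le {N : ℕ} (F : Submodule ℂ (Aff N)) (v : Aff N) :
    tangentAt (F : Set (Aff N)) v ≤ F := by
  intro h hh
  rw [mem_tangentAt] at hh
  by_contra hv
  obtain ⟨l, hl, hF⟩ := Submodule.exists_le_ker_of_notMem hv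
  refine hl ?_
  rw [← polyDiff_linPoly l v]
  exact hh _ fun w hw => by rw [eval_linPoly]; exact hF hw

lemma le_tangentAt_of_subset {N : ℕ} {V : Set (Aff N)} {F : Submodule ℂ (Aff N)}
    (hF : (F : Set (Aff N)) ⊆ V) {v : Aff N} (hv : v ∈ F) : F ≤ tangentAt V v := by
  intro h hh
  rw [mem_tangentAt]
  exact fun p hp => polyDiff_eq_zero_of_line v h p fun t =>
    hp _ (hF (F.add_mem hv (F.smul_mem t hh)))

/-- A polynomial which is bounded on a Zariski-closed set takes only finitely many values there. For
each of the uncountably many `c` outside the range, `f - c` has an inverse `q c` on `Z` by the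
Nullstellensatz. As the polynomial ring has countable dimension, there is a linear relation between
the `q c`; after clearing denominators it is a non-trivial polynomial equation satisfied by `f`
on `Z`. -/
lemma finite_image_of_bounded {N : ℕ} {Z : Set (Aff N)} (hZ : zClosed Z)
    (f : MvPolynomial (Fin (N + 1)) ℂ) (K : ℝ) (hK : ∀ v ∈ Z, ‖eval v f‖ ≤ K) :
    ((fun v => eval v f) '' Z).Finite := by
  obtain ⟨S, rfl⟩ := hZ
  set Z := {x : Aff N | ∀ p ∈ S, eval x p = 0} with hZ
  have hinv : ∀ c : {c : ℂ // K < ‖c‖}, ∃ q : MvPolynomial (Fin (N + 1)) ℂ,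
      ∀ v ∈ Z, eval v q * (eval v f - c) = 1 := by
    intro c
    have hzl : zeroLocus ℂ (Ideal.span (S ∪ {f - C (c : ℂ)})) = ∅ := by
      rw [zeroLocus_span, Set.eq_empty_iff_forall_notMem]
      intro v hv
      have h1 : v ∈ Z := fun p hp => hv p (.inl hp)
      have h2 : eval v f - c = 0 := by
        simpa [aeval_def] using hv _ (.inr rfl)
      have h3 := hK v h1
      rw [sub_eq_zero.mp h2] at h3
      exact absurd c.2 (not_lt.mpr h3)
    have htop : Ideal.span (S ∪ {f - C (c : ℂ)}) = ⊤ := by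
      rw [← Ideal.radical_eq_top, ← vanishingIdeal_zeroLocus_eq_radical (K := ℂ), hzl]
      exact vanishingIdeal_empty
    have h1 : (1 : MvPolynomial (Fin (N + 1)) ℂ) ∈ Ideal.span (S ∪ {f - C (c : ℂ)}) := by
      rw [htop]; trivial
    rw [Ideal.span_union, Submodule.mem_sup] at h1
    obtain ⟨a, ha, b, hb, hab⟩ := h1
    obtain ⟨q, rfl⟩ := Ideal.mem_span_singleton'.mp hb
    refine ⟨q, fun v hv => ?_⟩
    have hav : eval v a = 0 := by
      have : Ideal.span S ≤ RingHom.ker (eval v) := Ideal.span_le.mpr fun p hp => hv p hp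
      exact this ha
    have := congrArg (eval v) hab
    simpa [hav] using this
  choose q hq using hinv
  -- Restriction of polynomials to functions on `Z`.
  let res : MvPolynomial (Fin (N + 1)) ℂ →ₗ[ℂ] (Z → ℂ) :=
    LinearMap.pi fun v => (MvPolynomial.aeval (v : Aff N)).toLinearMap
  have hnot : ¬ LinearIndependent ℂ (fun c => (⟨res (q c), ⟨_, rfl⟩⟩ : LinearMap.range res)) := by
    intro hli
    have h2 : Module.rank ℂ (LinearMap.range res) ≤ Cardinal.aleph0 := by
      refine (rank_range_le res).trans ?_
      rw [← (basisMonomials (Fin (N + 1)) ℂ).mk_eq_rank'']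
      exact Cardinal.mk_le_aleph0
    have h3 : Countable {c : ℂ // K < ‖c‖} :=
      Cardinal.mk_le_aleph0_iff.mp (hli.cardinal_le_rank.trans h2)
    have h4 : Dense {c : ℂ | K < ‖c‖}ᶜ := Set.Countable.dense_compl ℝ h3
    have h5 : IsClosed {c : ℂ | K < ‖c‖}ᶜ :=
      (isOpen_lt continuous_const continuous_norm).isClosed_compl
    have h6 : ((|K| + 1 : ℝ) : ℂ) ∈ {c : ℂ | K < ‖c‖}ᶜ := by
      rw [← h5.closure_eq]; exact h4 _
    refine h6 ?_
    rw [Set.mem_ofPred_eq, Complex.norm_real, Real.norm_of_nonneg (by positivity)]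
    linarith [le_abs_self K]
  have hnot' : ¬ LinearIndependent ℂ (fun c => res (q c)) := fun h => by
    refine hnot (LinearIndependent.of_comp (LinearMap.range res).subtype ?_)
    exact h
  rw [not_linearIndependent_iff] at hnot'
  obtain ⟨s, a, hsum, c₀, hc₀, hac₀⟩ := hnot'
  classical
  -- The relation `∑ a c / (f - c) = 0` on `Z`, with denominators cleared.
  let P : Polynomial ℂ := ∑ c ∈ s, Polynomial.C (a c) *
    ∏ d ∈ s.erase c, (Polynomial.X - Polynomial.C (d : ℂ))
  have hP : P ≠ 0 := by
    intro h0
    have h1 := congrArg (Polynomial.eval (c₀ : ℂ)) h0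
    simp only [P, Polynomial.eval_finsetSum, Polynomial.eval_mul, Polynomial.eval_C,
      Polynomial.eval_prod, Polynomial.eval_sub, Polynomial.eval_X, Polynomial.eval_zero] at h1
    rw [Finset.sum_eq_single c₀] at h1
    · rcases mul_eq_zero.mp h1 with h1 | h1
      · exact hac₀ h1
      · obtain ⟨d, hd, hd0⟩ := Finset.prod_eq_zero_iff.mp h1
        exact (Finset.ne_of_mem_erase hd) (Subtype.ext (sub_eq_zero.mp hd0).symm)
    · intro c hc hne
      rw [Finset.prod_eq_zero (Finset.mem_erase.mpr ⟨hne.symm, hc₀⟩) (sub_self _), mul_zero]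
    · exact fun h => absurd hc₀ h
  refine (P.roots.toFinset.finite_toSet).subset ?_
  rintro _ ⟨v, hv, rfl⟩
  simp only [Finset.mem_coe, Multiset.mem_toFinset, Polynomial.mem_roots hP, Polynomial.IsRoot]
  have h1 : ∑ c ∈ s, a c * eval v (q c) = 0 := by
    have := congrFun hsum ⟨v, hv⟩
    simpa [res] using this
  simp only [P, Polynomial.eval_finsetSum, Polynomial.eval_mul, Polynomial.eval_C,
    Polynomial.eval_prod, Polynomial.eval_sub, Polynomial.eval_X]
  rw [← zero_mul (∏ d ∈ s, (eval v f - (d : ℂ))), ← h1, Finset.sum_mul]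
  refine Finset.sum_congr rfl fun c hc => ?_
  rw [← Finset.mul_prod_erase s _ hc]
  linear_combination (-(a c) * ∏ d ∈ s.erase c, (eval v f - (d : ℂ))) * hq c v hv

/-! ### Cones ruled by linear spaces -/

/-- The affine cone `V ⊆ ℂ^{2n}` over a scroll over a curve in `ℙ^{2n-1}`, with the family `𝓕` of
`n`-dimensional linear spaces corresponding to the fibres. Of smoothness only the dimension `n + 1`
of the Zariski tangent spaces away from the vertex is kept. -/
structure RuledCone {N : ℕ} (n : ℕ) (V : Set (Aff N)) (𝓕 : Set (Submodule ℂ (Aff N))) : Prop where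
  dim_eq : N + 1 = n + n
  pos : 0 < n
  closed : zClosed V
  irred : zIrred V
  tangent : ∀ v ∈ V, v ≠ 0 → Module.finrank ℂ (tangentAt V v) = n + 1
  rank : ∀ F ∈ 𝓕, Module.finrank ℂ F = n
  disj : ∀ F ∈ 𝓕, ∀ F' ∈ 𝓕, ∀ v, v ∈ F → v ∈ F' → v ≠ 0 → F = F'
  sub : ∀ F ∈ 𝓕, (F : Set (Aff N)) ⊆ V
  cover : ∀ v ∈ V, ∃ F ∈ 𝓕, v ∈ F

namespace RuledCone
variable {N n : ℕ} {V : Set (Aff N)} {𝓕 : Set (Submodule ℂ (Aff N))}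

lemma smul_mem (hR : RuledCone n V 𝓕) (a : ℂ) (v : Aff N) (hv : v ∈ V) : a • v ∈ V := by
  obtain ⟨F, hF, hvF⟩ := hR.cover v hv
  exact hR.sub F hF (F.smul_mem a hvF)

lemma exists_unit (hR : RuledCone n V 𝓕) {F : Submodule ℂ (Aff N)} (hF : F ∈ 𝓕) : ∃ v ∈ F, ‖v‖ = 1 := by
  have h1 : F ≠ ⊥ := by
    rintro rfl
    have := hR.rank _ hF
    rw [finrank_bot] at this
    exact hR.pos.ne this
  obtain ⟨v, hv, hv0⟩ := Submodule.exists_mem_ne_zero_of_ne_bot h1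
  exact ⟨((‖v‖ : ℝ) : ℂ)⁻¹ • v, F.smul_mem _ hv, by simp [norm_smul, hv0]⟩

/-- If there were finitely many fibres, `V` would be one of them by irreducibility, and its tangent
spaces would be too small. -/
lemma infinite (hR : RuledCone n V 𝓕) : 𝓕.Infinite := by
  intro hfin
  obtain ⟨F, hF, hVF⟩ := hR.irred.subset_of_finite hfin.toFinset
    (fun F : Submodule ℂ (Aff N) => (F : Set (Aff N))) (fun F _ => zClosed_submodule F) (by
      intro v hv
      obtain ⟨F, hF, hvF⟩ := hR.cover v hv
      simp only [Set.mem_iUnion]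
      exact ⟨F, by simpa using hF, hvF⟩)
  have hF' : F ∈ 𝓕 := by simpa using hF
  obtain ⟨v, hv, hv1⟩ := hR.exists_unit hF'
  have h1 := hR.tangent v (hR.sub F hF' hv) (by rintro rfl; simp at hv1)
  have h2 := Submodule.finrank_mono ((tangentAt_mono hVF v).trans (tangentAt_submodule_le F v))
  rw [h1, hR.rank F hF'] at h2
  omega

/-- Some fibre is accumulated by the others at some non-zero point. Otherwise every point of the
compact set of unit vectors in `V` has a neighbourhood meeting only one fibre, and there would be
finitely many fibres. -/
lemma exists_accumulated (hR : RuledCone n V 𝓕) : ∃ F ∈ 𝓕, ∃ v ∈ F, v ≠ 0 ∧ v ∈ closure (V \ F) := by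
  by_contra! hno
  refine hR.infinite ?_
  have hK : IsCompact (V ∩ Metric.sphere (0 : Aff N) 1) :=
    (isCompact_sphere _ _).inter_left hR.closed.isClosed
  choose! f hf hvf using hR.cover
  have hnhds : ∀ v ∈ V ∩ Metric.sphere (0 : Aff N) 1, (V \ f v)ᶜ ∈ 𝓝 v := by
    rintro v ⟨hv, hv1⟩
    have hv0 : v ≠ 0 := by rintro rfl; simp at hv1
    have := hno (f v) (hf v hv) v (hvf v hv) hv0
    rwa [mem_closure_iff_frequently, not_frequently] at this
  obtain ⟨t, ht, hcov⟩ := hK.elim_nhds_subcover _ hnhds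
  refine (t.finite_toSet.image f).subset fun F hF => ?_
  obtain ⟨v, hv, hv1⟩ := hR.exists_unit hF
  have hvK : v ∈ V ∩ Metric.sphere (0 : Aff N) 1 := ⟨hR.sub F hF hv, by simpa using hv1⟩
  obtain ⟨w, hw, hvw⟩ := Set.mem_iUnion₂.mp (hcov hvK)
  refine ⟨w, hw, hR.disj _ (hf w (ht w hw).1) _ hF v ?_ hv (by rintro rfl; simp at hv1)⟩
  by_contra hvn
  exact hvw ⟨hvK.1, hvn⟩

/-- Two distinct fibres are complementary: they meet in `0`, and `n + n` is the dimension of the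
ambient space. -/
lemma isCompl (hR : RuledCone n V 𝓕) {F F' : Submodule ℂ (Aff N)} (hF : F ∈ 𝓕) (hF' : F' ∈ 𝓕) (hne : F ≠ F') :
    IsCompl F F' := by
  have hd : Disjoint F F' := by
    rw [Submodule.disjoint_def]
    intro v hv hv'
    by_contra h0
    exact hne (hR.disj F hF F' hF' v hv hv' h0)
  refine ⟨hd, ?_⟩
  rw [codisjoint_iff]
  apply Submodule.eq_top_of_finrank_eq
  have h1 := Submodule.finrank_sup_add_finrank_inf_eq F F'
  rw [hd.eq_bot, finrank_bot, hR.rank F hF, hR.rank F' hF'] at h1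
  simp only [Module.finrank_fin_fun]
  have := hR.dim_eq
  omega

/-- Linear coordinates `(x, y)` in which two given fibres are `{y = 0}` and `{x = 0}`. -/
lemma exists_coords (hR : RuledCone n V 𝓕) {F F' : Submodule ℂ (Aff N)} (hF : F ∈ 𝓕) (hF' : F' ∈ 𝓕) (hne : F ≠ F') :
    ∃ Φ : ((Fin n → ℂ) × (Fin n → ℂ)) ≃ₗ[ℂ] Aff N,
      (∀ x y, Φ (x, y) ∈ F ↔ y = 0) ∧ (∀ x y, Φ (x, y) ∈ F' ↔ x = 0) := by
  have hc := hR.isCompl hF hF' hne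
  let e : (Fin n → ℂ) ≃ₗ[ℂ] F := LinearEquiv.ofFinrankEq _ _ (by simp [hR.rank F hF])
  let e' : (Fin n → ℂ) ≃ₗ[ℂ] F' := LinearEquiv.ofFinrankEq _ _ (by simp [hR.rank F' hF'])
  refine ⟨(e.prodCongr e').trans (Submodule.prodEquivOfIsCompl F F' hc), fun x y => ?_,
    fun x y => ?_⟩
  · simp only [LinearEquiv.trans_apply, LinearEquiv.prodCongr_apply,
      Submodule.coe_prodEquivOfIsCompl']
    rw [Submodule.add_mem_iff_right _ (e x).2]
    constructor
    · intro h
      have := (Submodule.disjoint_def.mp hc.disjoint) _ h (e' y).2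
      simpa using this
    · rintro rfl; simp
  · simp only [LinearEquiv.trans_apply, LinearEquiv.prodCongr_apply,
      Submodule.coe_prodEquivOfIsCompl']
    rw [Submodule.add_mem_iff_left _ (e' y).2]
    constructor
    · intro h
      have := (Submodule.disjoint_def.mp hc.disjoint) _ (e x).2 h
      simpa using this
    · rintro rfl; simp

end RuledCone

/-- A complement of `{x = 0}` is the graph of a linear map `x ↦ A x`. -/
lemma exists_graph {N n : ℕ} (Φ : ((Fin n → ℂ) × (Fin n → ℂ)) ≃ₗ[ℂ] Aff N)
    {F F' : Submodule ℂ (Aff N)} (hc : IsCompl F F') (hF' : ∀ x y, Φ (x, y) ∈ F' ↔ x = 0) :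
    ∃ A : (Fin n → ℂ) →ₗ[ℂ] (Fin n → ℂ), ∀ x y, Φ (x, y) ∈ F ↔ y = A x := by
  let P : Aff N →ₗ[ℂ] F := Submodule.projectionOnto F F' hc
  let A : (Fin n → ℂ) →ₗ[ℂ] (Fin n → ℂ) :=
    LinearMap.snd ℂ _ _ ∘ₗ Φ.symm.toLinearMap ∘ₗ F.subtype ∘ₗ P ∘ₗ Φ.toLinearMap ∘ₗ
      LinearMap.inl ℂ _ _
  have hA : ∀ x, Φ (x, A x) ∈ F := by
    intro x
    have h1 : Φ (x, 0) - P (Φ (x, 0)) ∈ F' := by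
      rw [← Submodule.projectionOnto_apply_eq_zero_iff hc, map_sub,
        Submodule.projectionOnto_apply_left]
      exact sub_self _
    set q := Φ.symm (P (Φ (x, 0))) with hq
    have hq' : Φ q = P (Φ (x, 0)) := by simp [hq]
    rw [← hq', ← map_sub] at h1
    have h2 : x - q.1 = 0 := (hF' (x - q.1) (0 - q.2)).mp h1
    have h3 : (x, A x) = q := Prod.ext (sub_eq_zero.mp h2) rfl
    rw [h3, hq']
    exact (P _).2
  refine ⟨A, fun x y => ⟨fun h => ?_, fun h => h ▸ hA x⟩⟩
  have h1 : Φ (0, y - A x) ∈ F := by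
    have := F.sub_mem h (hA x)
    rw [← map_sub] at this
    simpa using this
  have h2 := (Submodule.disjoint_def.mp hc.disjoint) _ h1 ((hF' _ _).mpr rfl)
  have h3 := Φ.map_eq_zero_iff.mp h2
  exact sub_eq_zero.mp (Prod.ext_iff.mp h3).2

/-- The local data of a ruled cone along a fibre with equation `x = 0`. The forms are the
differentials of all polynomials vanishing on `V`. -/
noncomputable def RuledCone.germ {N n : ℕ} {V : Set (Aff N)} {𝓕 : Set (Submodule ℂ (Aff N))}
    (hR : RuledCone n V 𝓕) {F : Submodule ℂ (Aff N)} (hF : F ∈ 𝓕)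
    (Φ : ((Fin n → ℂ) × (Fin n → ℂ)) ≃ₗ[ℂ] Aff N) (hΦ : ∀ x y, Φ (x, y) ∈ F ↔ x = 0) :
    FibreGerm n where
  J := vanishSet V
  V := {q | Φ q ∈ V}
  smul_mem a x y h := by
    have := hR.smul_mem a _ h
    rwa [← map_smul] at this
  g p y := LinearMap.toContinuousLinearMap
    (polyDiff (Φ (0, y)) p.1 ∘ₗ Φ.toLinearMap ∘ₗ LinearMap.inl ℂ _ _)
  g_cont p := by
    have hΦc : Continuous fun y : Fin n → ℂ => Φ (0, y) :=
      (Φ.toLinearMap.continuous_of_finiteDimensional).comp (by fun_prop)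
    have : (fun y => LinearMap.toContinuousLinearMap
        (polyDiff (Φ (0, y)) p.1 ∘ₗ Φ.toLinearMap ∘ₗ LinearMap.inl ℂ (Fin n → ℂ) (Fin n → ℂ)))
        = fun y => ∑ i, eval (Φ (0, y)) (pderiv i p.1) • LinearMap.toContinuousLinearMap
          (LinearMap.proj i ∘ₗ Φ.toLinearMap ∘ₗ LinearMap.inl ℂ (Fin n → ℂ) (Fin n → ℂ)) := by
      funext y
      ext x
      simp [polyDiff]
    rw [this]
    exact continuous_finsetSum _ fun i _ =>
      ((MvPolynomial.continuous_eval _).comp hΦc).smul continuous_const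
  g_bound p R := by
    set M := ‖LinearMap.toContinuousLinearMap Φ.toLinearMap‖ with hM
    have hΦb : ∀ q, ‖Φ q‖ ≤ M * ‖q‖ := fun q =>
      (LinearMap.toContinuousLinearMap Φ.toLinearMap).le_opNorm q
    obtain ⟨K, hK, hb⟩ := taylor_bound p.1 (M * R)
    refine ⟨K * M ^ 2, by positivity, fun x y hx hy hV => ?_⟩
    have hy1 : ‖Φ (0, y)‖ ≤ M * ‖y‖ := by simpa using hΦb (0, y)
    have hx1 : ‖Φ (x, 0)‖ ≤ M * ‖x‖ := by simpa using hΦb (x, 0)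
    have h1 := hb (Φ (0, y)) (Φ (x, 0)) (hy1.trans (by gcongr)) (hx1.trans (by gcongr))
    have h2 : eval (Φ (0, y)) p.1 = 0 := p.2 _ (hR.sub F hF ((hΦ _ _).mpr rfl))
    have h3 : eval (Φ (0, y) + Φ (x, 0)) p.1 = 0 := by
      rw [← map_add]
      exact p.2 _ (by simpa using hV)
    rw [h2, h3, sub_zero, zero_sub, norm_neg] at h1
    calc _ ≤ K * ‖Φ (x, 0)‖ ^ 2 := h1
      _ ≤ K * (M * ‖x‖) ^ 2 := by gcongr
      _ = _ := by ring
  line y hy := by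
    have hv0 : Φ (0, y) ≠ 0 := fun h => hy (Prod.ext_iff.mp (Φ.map_eq_zero_iff.mp h)).2
    have hvF : Φ (0, y) ∈ F := (hΦ _ _).mpr rfl
    set T := tangentAt V (Φ (0, y)) with hT
    have hTr : Module.finrank ℂ T = n + 1 := hR.tangent _ (hR.sub F hF hvF) hv0
    let ι : (Fin n → ℂ) →ₗ[ℂ] Aff N := Φ.toLinearMap ∘ₗ LinearMap.inl ℂ _ _
    have hι : Function.Injective ι := Φ.injective.comp LinearMap.inl_injective
    set K : Submodule ℂ (Fin n → ℂ) := T.comap ι with hK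
    have hK1 : Module.finrank ℂ K ≤ 1 := by
      have hFT : F ≤ T := le_tangentAt_of_subset (hR.sub F hF) hvF
      have hdisj : K.map ι ⊓ F = ⊥ := by
        rw [eq_bot_iff]
        rintro _ ⟨⟨x, hx, rfl⟩, hxF⟩
        have : x = 0 := (hΦ x 0).mp hxF
        simp [this]
      have h1 := Submodule.finrank_sup_add_finrank_inf_eq (K.map ι) F
      rw [hdisj, finrank_bot, ← LinearEquiv.finrank_eq (Submodule.equivMapOfInjective ι hι K)] at h1
      have hle : K.map ι ⊔ F ≤ T := sup_le (Submodule.map_comap_le ι T) hFT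
      have h2 := (Submodule.finrank_mono hle).trans_eq hTr
      have h3 := hR.rank F hF
      omega
    have hmem : ∀ z, (∀ j : vanishSet V, (LinearMap.toContinuousLinearMap
        (polyDiff (Φ (0, y)) j.1 ∘ₗ Φ.toLinearMap ∘ₗ LinearMap.inl ℂ _ _)) z = 0) → z ∈ K := by
      intro z hz
      rw [hK, Submodule.mem_comap, hT, mem_tangentAt]
      exact fun p hp => hz ⟨p, hp⟩
    obtain ⟨z₀, hz₀⟩ := finrank_le_one_iff.mp hK1
    by_cases h0 : (z₀ : Fin n → ℂ) = 0
    · refine ⟨0, fun z _ hz => ?_⟩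
      obtain ⟨c, hc⟩ := hz₀ ⟨z, hmem z hz⟩
      have := congrArg Subtype.val hc
      simpa [h0] using this.symm
    · obtain ⟨i, hi⟩ := Function.ne_iff.mp h0
      refine ⟨ContinuousLinearMap.proj i, fun z hφ hz => ?_⟩
      obtain ⟨c, hc⟩ := hz₀ ⟨z, hmem z hz⟩
      have h1 : c • (z₀ : Fin n → ℂ) = z := congrArg Subtype.val hc
      rw [← h1] at hφ ⊢
      have h2 : c * (z₀ : Fin n → ℂ) i = 0 := by simpa using hφ
      rcases mul_eq_zero.mp h2 with h2 | h2
      · simp [h2]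
      · exact absurd h2 hi

/-! ### Equations of a ruled cone -/

/-- Coordinates in which an accumulated fibre `F` is `{x = 0}` and another fibre `F₀` is `{y = 0}`,
together with an isomorphism `B` of `ℂⁿ` for which `x ∧ B y` is of second order in `x` on the
cone. -/
lemma RuledCone.exists_normal_form {N n : ℕ} {V : Set (Aff N)} {𝓕 : Set (Submodule ℂ (Aff N))}
    (hR : RuledCone n V 𝓕) :
    ∃ F ∈ 𝓕, ∃ F₀ ∈ 𝓕, F₀ ≠ F ∧ ∃ Φ : ((Fin n → ℂ) × (Fin n → ℂ)) ≃ₗ[ℂ] Aff N,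
      (∀ x y, Φ (x, y) ∈ F ↔ x = 0) ∧ (∀ x y, Φ (x, y) ∈ F₀ ↔ y = 0) ∧
      ∃ B : (Fin n → ℂ) →ₗ[ℂ] (Fin n → ℂ), (∀ y, B y = 0 → y = 0) ∧
        ∀ i k, ∃ K : ℝ, ∀ x y, Φ (x, y) ∈ V → ‖x i * B y k - x k * B y i‖ ≤ K * ‖x‖ ^ 2 := by
  have : NeZero n := ⟨hR.pos.ne'⟩
  obtain ⟨F, hF, v₀, hv₀F, hv₀, hacc⟩ := hR.exists_accumulated
  obtain ⟨F₀, hF₀, hne⟩ := hR.infinite.exists_notMem_finset {F}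
  simp only [Finset.mem_singleton] at hne
  obtain ⟨Φ, hΦ₀, hΦ⟩ := hR.exists_coords hF₀ hF hne
  obtain ⟨⟨x₀, y₀⟩, rfl⟩ := Φ.surjective v₀
  obtain rfl := (hΦ x₀ y₀).mp hv₀F
  have hy₀ : y₀ ≠ 0 := by rintro rfl; exact hv₀ (map_zero Φ)
  let D := hR.germ hF Φ hΦ
  -- The maps `C` whose graphs `x = C y` are fibres other than `F`.
  let 𝒞 : Set ((Fin n → ℂ) →L[ℂ] (Fin n → ℂ)) :=
    {C | ∃ G ∈ 𝓕, G ≠ F ∧ ∀ x y, Φ (x, y) ∈ G ↔ x = C y}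
  have hinj : ∀ C ∈ 𝒞, ∀ y, C y = 0 → y = 0 := by
    rintro C ⟨G, hG, hGF, hC⟩ y hy
    have h1 : Φ (0, y) ∈ G := (hC 0 y).mpr hy.symm
    have h2 := (Submodule.disjoint_def.mp (hR.isCompl hG hF hGF).disjoint) _ h1 ((hΦ 0 y).mpr rfl)
    exact (Prod.ext_iff.mp (Φ.map_eq_zero_iff.mp h2)).2
  have hV : ∀ C ∈ 𝒞, ∀ y, (C y, y) ∈ D.V := by
    rintro C ⟨G, hG, hGF, hC⟩ y
    exact hR.sub G hG ((hC _ y).mpr rfl)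
  have hacc' : ∀ ε > 0, ∃ C ∈ 𝒞, ∃ y, ‖y - y₀‖ < ε ∧ ‖C y‖ < ε := by
    intro ε hε
    have hcont : Continuous Φ.symm :=
      Φ.symm.toLinearMap.continuous_of_finiteDimensional
    -- The radius is at most `‖y₀‖`, so that the nearby point does not lie on `F₀ = {y = 0}`.
    have hU : Φ.symm ⁻¹' Metric.ball (0, y₀) (min ε ‖y₀‖) ∈ 𝓝 (Φ (0, y₀)) := by
      refine hcont.continuousAt.preimage_mem_nhds ?_
      rw [LinearEquiv.symm_apply_apply]
      exact Metric.ball_mem_nhds _ (lt_min hε (norm_pos_iff.mpr hy₀))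
    obtain ⟨v, hvU, hvV, hvF⟩ := mem_closure_iff_nhds.mp hacc _ hU
    obtain ⟨⟨x, y⟩, rfl⟩ := Φ.surjective v
    rw [Set.mem_preimage, LinearEquiv.symm_apply_apply, mem_ball_iff_norm, Prod.mk_sub_mk,
      Prod.norm_mk, sub_zero, max_lt_iff, lt_min_iff, lt_min_iff] at hvU
    obtain ⟨⟨hx, -⟩, hy, hy'⟩ := hvU
    obtain ⟨G, hG, hvG⟩ := hR.cover _ hvV
    have hGF : G ≠ F := by rintro rfl; exact hvF hvG
    have hGF₀ : G ≠ F₀ := by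
      rintro rfl
      obtain rfl := (hΦ₀ x y).mp hvG
      simp at hy'
    obtain ⟨A, hA⟩ := exists_graph ((LinearEquiv.prodComm ℂ _ _).trans Φ)
      (hR.isCompl hG hF₀ hGF₀) (fun a b => by simpa using hΦ₀ b a)
    have hA' : ∀ x y, Φ (x, y) ∈ G ↔ x = A y := fun x y => by simpa using hA y x
    refine ⟨LinearMap.toContinuousLinearMap A, ⟨G, hG, hGF, hA'⟩, y, hy, ?_⟩
    rw [LinearMap.coe_toContinuousLinearMap', ← (hA' x y).mp hvG]
    exact hx
  obtain ⟨B, hB, hBg⟩ := D.exists_limit 𝒞 hinj hV (D.exists_small 𝒞 hinj hV y₀ hy₀ hacc')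
  exact ⟨F, hF, F₀, hF₀, hne, Φ, hΦ, hΦ₀, B.toLinearMap, hB, D.wedge_bound B hB hBg⟩

/-- The quadratic map `x ↦ x ∧ D x` vanishes as soon as it vanishes at all sums `e_a + e_b` of two
standard basis vectors (where `a = b` is allowed). -/
lemma wedge_self_eq_zero {n : ℕ} (D : (Fin n → ℂ) →ₗ[ℂ] (Fin n → ℂ)) (i k : Fin n)
    (h : ∀ a b : Fin n, (Pi.single a 1 + Pi.single b 1 : Fin n → ℂ) i *
        D (Pi.single a 1 + Pi.single b 1) k
      = (Pi.single a 1 + Pi.single b 1 : Fin n → ℂ) k * D (Pi.single a 1 + Pi.single b 1) i)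
    (x : Fin n → ℂ) : x i * D x k = x k * D x i := by
  let β : (Fin n → ℂ) →ₗ[ℂ] (Fin n → ℂ) →ₗ[ℂ] ℂ :=
    LinearMap.mk₂ ℂ (fun x z => x i * D z k - x k * D z i)
      (fun _ _ _ => by simp; ring) (fun _ _ _ => by simp; ring)
      (fun _ _ _ => by simp; ring) (fun _ _ _ => by simp; ring)
  have hβ : ∀ x z, β x z = x i * D z k - x k * D z i := fun _ _ => rfl
  have h0 : ∀ a b : Fin n, β (Pi.single a 1 + Pi.single b 1) (Pi.single a 1 + Pi.single b 1) = 0 :=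
    fun a b => by rw [hβ, h a b, sub_self]
  have h1 : ∀ a : Fin n, β (Pi.single a 1) (Pi.single a 1) = 0 := fun a => by
    have := h0 a a
    simp only [map_add, LinearMap.add_apply] at this
    linear_combination this / 4
  have h2 : β + β.flip = 0 := by
    refine (Pi.basisFun ℂ (Fin n)).ext fun a => (Pi.basisFun ℂ (Fin n)).ext fun b => ?_
    have := h0 a b
    simp only [map_add, LinearMap.add_apply, h1] at this
    simp only [Pi.basisFun_apply, LinearMap.add_apply, LinearMap.flip_apply, LinearMap.zero_apply]
    linear_combination this
  have h3 := LinearMap.congr_fun (LinearMap.congr_fun h2 x) x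
  simp only [LinearMap.add_apply, LinearMap.flip_apply, LinearMap.zero_apply, hβ] at h3
  linear_combination h3 / 2

/-- The bound `|x ∧ B y| = O(|x|²)` forces `x ∧ B y = 0` on the whole cone. For fixed `x` the
coordinates of `x ∧ B y` are bounded on the closed set `V ∩ {x = const}`, so they take finitely many
values. Writing the fibres as graphs `y = A x`, the quadratic maps `x ↦ x ∧ B A x` therefore form a
finite set, and by irreducibility only one of them occurs; for the fibre `{y = 0}` it is zero. -/
lemma RuledCone.wedge_eq_zero {N n : ℕ} {V : Set (Aff N)} {𝓕 : Set (Submodule ℂ (Aff N))}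
    (hR : RuledCone n V 𝓕) {F F₀ : Submodule ℂ (Aff N)} (hF : F ∈ 𝓕) (hF₀ : F₀ ∈ 𝓕)
    (Φ : ((Fin n → ℂ) × (Fin n → ℂ)) ≃ₗ[ℂ] Aff N)
    (hΦ : ∀ x y, Φ (x, y) ∈ F ↔ x = 0) (hΦ₀ : ∀ x y, Φ (x, y) ∈ F₀ ↔ y = 0)
    (B : (Fin n → ℂ) →ₗ[ℂ] (Fin n → ℂ))
    (hB : ∀ i k, ∃ K : ℝ, ∀ x y, Φ (x, y) ∈ V → ‖x i * B y k - x k * B y i‖ ≤ K * ‖x‖ ^ 2)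
    (x y : Fin n → ℂ) (hxy : Φ (x, y) ∈ V) (i k : Fin n) : x i * B y k = x k * B y i := by
  -- The maps `A` whose graphs `y = A x` are fibres.
  let 𝒜 : Set ((Fin n → ℂ) →ₗ[ℂ] (Fin n → ℂ)) :=
    {A | ∃ G ∈ 𝓕, ∀ x y, Φ (x, y) ∈ G ↔ y = A x}
  have hAV : ∀ A ∈ 𝒜, ∀ x, Φ (x, A x) ∈ V := by
    rintro A ⟨G, hG, hA⟩ x
    exact hR.sub G hG ((hA x _).mpr rfl)
  have hVA : ∀ x y, Φ (x, y) ∈ V → x = 0 ∨ ∃ A ∈ 𝒜, y = A x := by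
    intro x y hxy
    obtain ⟨G, hG, hxyG⟩ := hR.cover _ hxy
    by_cases hGF : G = F
    · exact .inl ((hΦ x y).mp (hGF ▸ hxyG))
    · obtain ⟨A, hA⟩ := exists_graph Φ (hR.isCompl hG hF hGF) hΦ
      exact .inr ⟨A, ⟨G, hG, hA⟩, (hA x y).mp hxyG⟩
  -- The coordinates of `x` and of `B y` as linear forms on the ambient space.
  let px (i : Fin n) : Aff N →ₗ[ℂ] ℂ :=
    LinearMap.proj i ∘ₗ LinearMap.fst ℂ _ _ ∘ₗ Φ.symm.toLinearMap
  let py (i : Fin n) : Aff N →ₗ[ℂ] ℂ :=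
    LinearMap.proj i ∘ₗ B ∘ₗ LinearMap.snd ℂ _ _ ∘ₗ Φ.symm.toLinearMap
  have hpx : ∀ i x y, px i (Φ (x, y)) = x i := fun i x y => by simp [px]
  have hpy : ∀ i x y, py i (Φ (x, y)) = B y i := fun i x y => by simp [py]
  have hfin : ∀ (x : Fin n → ℂ) (i k : Fin n),
      ((fun A : (Fin n → ℂ) →ₗ[ℂ] (Fin n → ℂ) => x i * B (A x) k - x k * B (A x) i) '' 𝒜).Finite := by
    intro x i k
    obtain ⟨K, hK⟩ := hB i k
    let Z : Set (Aff N) := V ∩ {v | ∀ p ∈ Set.range fun j => linPoly (px j) - C (x j), eval v p = 0}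
    have hZ : zClosed Z := zClosed_inter hR.closed ⟨_, rfl⟩
    have hZx : ∀ y, Φ (x, y) ∈ V → Φ (x, y) ∈ Z := by
      refine fun y hy => ⟨hy, ?_⟩
      rintro _ ⟨j, rfl⟩
      simp [hpx]
    have hZ' : ∀ v ∈ Z, ∃ y, Φ (x, y) ∈ V ∧ v = Φ (x, y) := by
      rintro v ⟨hv, hv'⟩
      obtain ⟨⟨x', y⟩, rfl⟩ := Φ.surjective v
      have : x' = x := by
        funext j
        have := hv' _ ⟨j, rfl⟩
        rw [map_sub, eval_linPoly, hpx, eval_C] at this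
        exact sub_eq_zero.mp this
      subst this
      exact ⟨y, hv, rfl⟩
    let f := C (x i) * linPoly (py k) - C (x k) * linPoly (py i)
    have hf : ∀ y, eval (Φ (x, y)) f = x i * B y k - x k * B y i := fun y => by
      simp [f, hpy]
    refine (finite_image_of_bounded hZ f (K * ‖x‖ ^ 2) ?_).subset ?_
    · intro v hv
      obtain ⟨y, hy, rfl⟩ := hZ' v hv
      rw [hf]
      exact hK x y hy
    · rintro _ ⟨A, hA, rfl⟩
      exact ⟨Φ (x, A x), hZx _ (hAV A hA x), hf _⟩
  -- Finitely many coefficients determining the quadratic map `x ↦ x ∧ B A x`.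
  let κ (A : (Fin n → ℂ) →ₗ[ℂ] (Fin n → ℂ)) (q : (Fin n × Fin n) × (Fin n × Fin n)) : ℂ :=
    (Pi.single q.1.1 1 + Pi.single q.1.2 1 : Fin n → ℂ) q.2.1 *
        B (A (Pi.single q.1.1 1 + Pi.single q.1.2 1)) q.2.2 -
      (Pi.single q.1.1 1 + Pi.single q.1.2 1 : Fin n → ℂ) q.2.2 *
        B (A (Pi.single q.1.1 1 + Pi.single q.1.2 1)) q.2.1
  have hκfin : (κ '' 𝒜).Finite := by
    refine (Set.Finite.pi fun q : (Fin n × Fin n) × (Fin n × Fin n) =>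
      hfin (Pi.single q.1.1 1 + Pi.single q.1.2 1) q.2.1 q.2.2).subset ?_
    rintro _ ⟨A, hA, rfl⟩ q -
    exact ⟨A, hA, rfl⟩
  have hκ : ∀ A A', κ A = κ A' → ∀ x i k,
      x i * (B (A x) k - B (A' x) k) = x k * (B (A x) i - B (A' x) i) := by
    intro A A' h x i k
    refine wedge_self_eq_zero (B ∘ₗ A - B ∘ₗ A') i k (fun a b => ?_) x
    have := congrFun h ((a, b), (i, k))
    simp only [κ] at this
    simp only [LinearMap.sub_apply, LinearMap.comp_apply, Pi.sub_apply]
    linear_combination this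
  -- A representative of each of the finitely many classes of fibres.
  choose! r hr hrκ using fun c (hc : c ∈ κ '' 𝒜) => hc
  -- The closed set `x ∧ (B y - B (r c) x) = 0`, which contains all fibres of the class `c`.
  let W (c : (Fin n × Fin n) × (Fin n × Fin n) → ℂ) : Set (Aff N) :=
    {v | ∀ p ∈ Set.range fun q : Fin n × Fin n =>
      linPoly (px q.1) * (linPoly (py q.2) -
          linPoly (LinearMap.proj q.2 ∘ₗ B ∘ₗ r c ∘ₗ LinearMap.fst ℂ _ _ ∘ₗ Φ.symm.toLinearMap)) -
        linPoly (px q.2) * (linPoly (py q.1) -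
          linPoly (LinearMap.proj q.1 ∘ₗ B ∘ₗ r c ∘ₗ LinearMap.fst ℂ _ _ ∘ₗ Φ.symm.toLinearMap)),
      eval v p = 0}
  have hW : ∀ c x y, Φ (x, y) ∈ W c ↔
      ∀ i k, x i * (B y k - B (r c x) k) = x k * (B y i - B (r c x) i) := by
    intro c x y
    simp only [W, Set.mem_ofPred_eq, Set.forall_mem_range, Prod.forall, map_sub, map_mul,
      eval_linPoly, hpx, hpy, sub_eq_zero]
    simp
  obtain ⟨c, -, hVW⟩ := hR.irred.subset_of_finite hκfin.toFinset W (fun c _ => ⟨_, rfl⟩) (by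
    intro v hv
    obtain ⟨⟨x, y⟩, rfl⟩ := Φ.surjective v
    simp only [Set.mem_iUnion]
    rcases hVA x y hv with rfl | ⟨A, hA, rfl⟩
    · refine ⟨κ 0, ?_, ?_⟩
      · simpa using ⟨0, ⟨F₀, hF₀, hΦ₀⟩, rfl⟩
      · rw [hW]; simp
    · refine ⟨κ A, by simpa using ⟨A, hA, rfl⟩, ?_⟩
      rw [hW]
      exact hκ A _ (hrκ _ ⟨A, hA, rfl⟩).symm x)
  have h1 := (hW c x y).mp (hVW hxy) i k
  have h2 := (hW c x 0).mp (hVW (hR.sub F₀ hF₀ ((hΦ₀ x 0).mpr rfl))) i k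
  simp only [map_zero, Pi.zero_apply] at h2
  linear_combination h1 - h2

/-- A closed set which meets an affine line in infinitely many points contains the line. -/
lemma zClosed.line_subset {N : ℕ} {V : Set (Aff N)} (hV : zClosed V) (u w : Aff N)
    (hinf : {t : ℂ | u + t • w ∈ V}.Infinite) (t : ℂ) : u + t • w ∈ V := by
  obtain ⟨S, rfl⟩ := hV
  intro p hp
  let ρ : MvPolynomial (Fin (N + 1)) ℂ →ₐ[ℂ] Polynomial ℂ :=
    aeval fun i => Polynomial.C (u i) + Polynomial.X * Polynomial.C (w i)
  have hρ : ∀ q s, (ρ q).eval s = eval (u + s • w) q := by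
    intro q s
    induction q using MvPolynomial.induction_on with
    | C a => simp [ρ]
    | add p q hp hq => rw [map_add, Polynomial.eval_add, hp, hq, map_add]
    | mul_X p i hp => rw [map_mul, Polynomial.eval_mul, hp, map_mul]; simp [ρ, mul_comm s]
  have h0 : ρ p = 0 := Polynomial.eq_zero_of_infinite_isRoot _ (hinf.mono fun s hs => by
    rw [Set.mem_ofPred_eq, Polynomial.IsRoot, hρ]
    exact hs p hp)
  rw [← hρ, h0, Polynomial.eval_zero]

/-- Conversely, a point with `x ∧ B y = 0` and `x ≠ 0` lies on the line of all `(x, t B⁻¹ x)`. Every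
fibre other than `{x = 0}` meets that line, in distinct points for distinct fibres, so the closed
set `V` contains infinitely many points of the line, hence all of it. -/
lemma RuledCone.mem_of_wedge_eq_zero {N n : ℕ} {V : Set (Aff N)} {𝓕 : Set (Submodule ℂ (Aff N))}
    (hR : RuledCone n V 𝓕) {F : Submodule ℂ (Aff N)} (hF : F ∈ 𝓕)
    (Φ : ((Fin n → ℂ) × (Fin n → ℂ)) ≃ₗ[ℂ] Aff N)
    (hΦ : ∀ x y, Φ (x, y) ∈ F ↔ x = 0)
    (B : (Fin n → ℂ) ≃ₗ[ℂ] (Fin n → ℂ))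
    (hB : ∀ x y, Φ (x, y) ∈ V → ∀ i k, x i * B y k = x k * B y i)
    (x y : Fin n → ℂ) (hxy : ∀ i k, x i * B y k = x k * B y i) : Φ (x, y) ∈ V := by
  by_cases hx : x = 0
  · exact hR.sub F hF ((hΦ x y).mpr hx)
  obtain ⟨i₀, hi₀⟩ := Function.ne_iff.mp hx
  have hprop : ∀ y, (∀ i k, x i * B y k = x k * B y i) → ∃ t : ℂ, y = t • B.symm x := by
    intro y hy
    refine ⟨B y i₀ / x i₀, ?_⟩
    apply B.injective
    rw [map_smul, LinearEquiv.apply_symm_apply]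
    funext k
    rw [Pi.smul_apply, smul_eq_mul, div_mul_eq_mul_div, eq_div_iff hi₀]
    linear_combination hy i₀ k
  have hpt : ∀ t : ℂ, Φ (x, t • B.symm x) = Φ (x, 0) + t • Φ (0, B.symm x) := by
    intro t
    rw [← map_smul Φ, ← map_add]; simp
  obtain ⟨t, rfl⟩ := hprop y hxy
  rw [hpt]
  refine hR.closed.line_subset _ _ ?_ t
  have hex : ∀ G ∈ 𝓕 \ {F}, ∃ t : ℂ, Φ (x, t • B.symm x) ∈ G := by
    rintro G ⟨hG, hGF⟩
    obtain ⟨A, hA⟩ := exists_graph Φ (hR.isCompl hG hF hGF) hΦ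
    have hm : Φ (x, A x) ∈ G := (hA x _).mpr rfl
    obtain ⟨t, ht⟩ := hprop _ (hB _ _ (hR.sub G hG hm))
    exact ⟨t, ht ▸ hm⟩
  choose! τ hτ using hex
  refine ((hR.infinite.sdiff (Set.finite_singleton F)).image (f := τ) ?_).mono ?_
  · intro G hG G' hG' h
    refine hR.disj G hG.1 G' hG'.1 _ (hτ G hG) (h ▸ hτ G' hG') fun h0 => hx ?_
    exact (Prod.ext_iff.mp (Φ.map_eq_zero_iff.mp h0)).1
  · rintro _ ⟨G, hG, rfl⟩
    rw [Set.mem_ofPred_eq, ← hpt]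
    exact hR.sub G hG.1 (hτ G hG)

/-- A ruled cone is, in suitable linear coordinates, the set of pairs of proportional vectors. -/
theorem RuledCone.eq_segre {N n : ℕ} {V : Set (Aff N)} {𝓕 : Set (Submodule ℂ (Aff N))}
    (hR : RuledCone n V 𝓕) :
    ∃ Ψ : ((Fin n → ℂ) × (Fin n → ℂ)) ≃ₗ[ℂ] Aff N,
      ∀ x y, Ψ (x, y) ∈ V ↔ ∀ i k, x i * y k = x k * y i := by
  obtain ⟨F, hF, F₀, hF₀, -, Φ, hΦ, hΦ₀, B, hB, hbound⟩ := hR.exists_normal_form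
  let B' : (Fin n → ℂ) ≃ₗ[ℂ] (Fin n → ℂ) := LinearEquiv.ofInjectiveEndo B
    ((injective_iff_map_eq_zero B).mpr hB)
  have hB' : ∀ y, B' y = B y := fun _ => rfl
  have hw : ∀ x y, Φ (x, y) ∈ V → ∀ i k, x i * B' y k = x k * B' y i :=
    fun x y h => hR.wedge_eq_zero hF hF₀ Φ hΦ hΦ₀ B hbound x y h
  refine ⟨((LinearEquiv.refl ℂ (Fin n → ℂ)).prodCongr B'.symm).trans Φ, fun x y => ?_⟩
  have h := hw x (B'.symm y)
  have h' := hR.mem_of_wedge_eq_zero hF Φ hΦ B' hw x (B'.symm y)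
  simp only [LinearEquiv.apply_symm_apply] at h h'
  exact ⟨h, h'⟩

/-! ### The cone over a scroll -/

lemma mem_cone_iff {N : ℕ} {X : Set (Proj N)} {v : Aff N} (hv : v ≠ 0) :
    v ∈ cone X ↔ Projectivization.mk ℂ v hv ∈ X := by
  simp [cone, hv]

lemma rep_mem_cone_iff {N : ℕ} {X : Set (Proj N)} (z : Proj N) : z.rep ∈ cone X ↔ z ∈ X := by
  rw [mem_cone_iff z.rep_nonzero, Projectivization.mk_rep]

lemma submodule_mk_le_iff {N : ℕ} {F : Submodule ℂ (Aff N)} {v : Aff N} (hv : v ≠ 0) :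
    (Projectivization.mk ℂ v hv).submodule ≤ F ↔ v ∈ F := by
  rw [Projectivization.submodule_mk, Submodule.span_singleton_le_iff_mem]

/-- The affine cone over a scroll over a smooth curve is a ruled cone. -/
lemma ScrollOn.ruledCone {n : ℕ} {X : Set (Proj (2 * n - 1))}
    (hX : SmoothVariety X n) (S : ScrollOn (2 * n - 1) X n 1) :
    RuledCone n (cone X) (S.Fsub '' S.W) := by
  have hn := S.dim_eq
  have hcov : ∀ v (hv : v ≠ 0), v ∈ cone X ↔ ∃ w ∈ S.W, v ∈ S.Fsub w := by
    intro v hv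
    rw [mem_cone_iff hv, Set.ext_iff.mp S.cover]
    simp only [Set.mem_iUnion, Set.mem_ofPred_eq, submodule_mk_le_iff hv, exists_prop]
  have hsub : ∀ w ∈ S.W, (S.Fsub w : Set (Aff (2 * n - 1))) ⊆ cone X := by
    intro w hw v hv
    by_cases h0 : v = 0
    · exact .inr h0
    · exact (hcov v h0).mpr ⟨w, hw, hv⟩
  have hW : S.W.Nonempty := by
    rw [Set.nonempty_iff_ne_empty]
    intro hW
    have hX0 : cone X ⊆ {0} := by
      intro v hv
      by_contra h0
      obtain ⟨w, hw, -⟩ := (hcov v h0).mp hv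
      simp [hW] at hw
    -- The cone would be reduced to the origin, of dimension zero.
    have hdim := hX.2.2.1
    have : Subsingleton {W : Set (Aff (2 * n - 1)) // zClosed W ∧ zIrred W ∧ W ⊆ cone X} := by
      refine ⟨fun a b => Subtype.ext ?_⟩
      rw [Set.Nonempty.subset_singleton_iff a.2.2.1.1 |>.mp (a.2.2.2.trans hX0),
        Set.Nonempty.subset_singleton_iff b.2.2.1.1 |>.mp (b.2.2.2.trans hX0)]
    have h1 : adim (cone X) ≤ 0 := Order.krullDim_nonpos_of_subsingleton
    rw [hdim] at h1
    have h2 : ((n + 1 : ℕ) : WithBot ℕ∞) ≤ ((0 : ℕ) : WithBot ℕ∞) := h1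
    simp at h2
  have hsmul : ∀ (a : ℂ), ∀ v ∈ cone X, a • v ∈ cone X := by
    intro a v hv
    by_cases h0 : v = 0
    · rw [h0, smul_zero]; exact .inr rfl
    · obtain ⟨w, hw, hvw⟩ := (hcov v h0).mp hv
      exact hsub w hw ((S.Fsub w).smul_mem a hvw)
  refine ⟨by omega, by omega, hX.1, hX.2.1, fun v hv hv0 => ?_, ?_, ?_, ?_, fun v hv => ?_⟩
  · have h1 := hX.2.2.2 _ ((mem_cone_iff hv0).mp hv)
    obtain ⟨a, ha⟩ := Projectivization.exists_smul_eq_mk_rep ℂ v hv0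
    rw [projTangent, ← ha] at h1
    rw [← tangentAt_smul _ hsmul a a.ne_zero v]
    exact h1
  · rintro _ ⟨w, hw, rfl⟩
    rw [S.fib_rank w hw]
    omega
  · rintro _ ⟨w, hw, rfl⟩ _ ⟨w', hw', rfl⟩ v hv hv' hv0
    by_contra hne
    exact S.disjoint w hw w' hw' (fun h => hne (h ▸ rfl)) (Projectivization.mk ℂ v hv0)
      ((submodule_mk_le_iff hv0).mpr hv) ((submodule_mk_le_iff hv0).mpr hv')
  · rintro _ ⟨w, hw, rfl⟩
    exact hsub w hw
  · by_cases h0 : v = 0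
    · obtain ⟨w, hw⟩ := hW
      exact ⟨_, ⟨w, hw, rfl⟩, h0 ▸ zero_mem _⟩
    · obtain ⟨w, hw, hvw⟩ := (hcov v h0).mp hv
      exact ⟨_, ⟨w, hw, rfl⟩, hvw⟩

/-- `x ∧ y = 0` if and only if both vectors are multiples of one vector. -/
lemma wedge_eq_zero_iff {n : ℕ} (x y : Fin n → ℂ) :
    (∀ i k, x i * y k = x k * y i) ↔
      ∃ (a b : ℂ) (w : Fin n → ℂ), x = a • w ∧ y = b • w := by
  constructor
  · intro h
    by_cases hx : x = 0
    · exact ⟨0, 1, y, by simp [hx], by simp⟩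
    · obtain ⟨i, hi⟩ := Function.ne_iff.mp hx
      refine ⟨1, y i / x i, x, by simp, funext fun k => ?_⟩
      rw [Pi.smul_apply, smul_eq_mul, div_mul_eq_mul_div, eq_div_iff hi]
      linear_combination h i k
  · rintro ⟨a, b, w, rfl, rfl⟩ i k
    simp only [Pi.smul_apply, smul_eq_mul]; ring

/-- The only `n`-dimensional scroll over a smooth curve in `ℙ^{2n-1}` is the
Segre embedding `ℙ¹ × ℙ^{n-1} ⊆ ℙ^{2n-1}`. -/
theorem curve_scroll_is_segre {n : ℕ} (X : Set (Proj (2 * n - 1)))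
    (hX : SmoothVariety X n) (S : ScrollOn (2 * n - 1) X n 1) :
    IsSegre 2 n X := by
  obtain ⟨Ψ, hΨ⟩ := (S.ruledCone hX).eq_segre
  -- A `2 × n` matrix as the pair of its rows.
  let e₀ : (Fin 2 × Fin n → ℂ) ≃ₗ[ℂ] (Fin n → ℂ) × (Fin n → ℂ) :=
    { toFun := fun u => (fun j => u (0, j), fun j => u (1, j))
      map_add' := fun _ _ => rfl
      map_smul' := fun _ _ => rfl
      invFun := fun q p => ![q.1, q.2] p.1 p.2
      left_inv := by
        intro u
        funext ⟨i, j⟩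
        fin_cases i <;> rfl
      right_inv := fun _ => rfl }
  have he : ∀ y w, (e₀.trans Ψ) (segreVec 2 n y w) = Ψ (y 0 • w, y 1 • w) := fun _ _ => rfl
  refine ⟨e₀.trans Ψ, Set.ext fun z => ?_⟩
  simp only [Set.mem_ofPred_eq, he]
  constructor
  · intro hz
    rw [← rep_mem_cone_iff] at hz
    obtain ⟨⟨x, y⟩, hxy⟩ := Ψ.surjective z.rep
    rw [← hxy, hΨ, wedge_eq_zero_iff] at hz
    obtain ⟨a, b, w, rfl, rfl⟩ := hz
    refine ⟨![a, b], w, ?_⟩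
    rw [Projectivization.submodule_eq, ← hxy]
    rfl
  · rintro ⟨y, w, hz⟩
    have hu0 : Ψ (y 0 • w, y 1 • w) ≠ 0 := by
      intro h0
      have := z.rep_nonzero
      rw [Projectivization.submodule_eq, h0, Submodule.span_zero_singleton,
        Submodule.span_singleton_eq_bot] at hz
      exact this hz
    have hmem : Ψ (y 0 • w, y 1 • w) ∈ cone X :=
      (hΨ _ _).mpr ((wedge_eq_zero_iff _ _).mpr ⟨_, _, w, rfl, rfl⟩)
    rw [mem_cone_iff hu0] at hmem
    rw [← Projectivization.submodule_mk _ hu0] at hz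
    rwa [Projectivization.submodule_injective hz]
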